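/- arXiv:1008.5314 — 2 statements merged into one kernel-verified Lean document; each statement's English description precedes it below -/
import Mathlib

section
/- With notation as in the localization lemma: let L be a one-sided ladder with distinguished points (a_1,b_1),...,(a_s,b_s), sizes t, and (u,v) ∈ L a point lying exactly in the regions L_j,...,L_k with t_i ≥ 2 for j ≤ i ≤ k. Let L̂ be the modified ladder and r = (t_1,...,t_{j-1}, t_j - 1,...,t_k - 1, t_{k+1},...,t_s). Then there is a K-algebra isomorphism K[L]/I_t(L)[x_{u,v}^{-1}] ≅ K[L̂]/I_r(L̂)[x_{a_{j-1}+1,v},...,x_{a_k,v}, x_{u,b_j},...,x_{u,b_{k+1}-1}, x_{u,v}^{-1}]. -/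
open MvPolynomial

variable {K : Type*} [Field K]

/-- Any `K`-algebra structure on a ring localizes. -/
noncomputable instance locAwayAlgebra {K R : Type*} [CommSemiring K] [CommRing R]
    [Algebra K R] (x : R) : Algebra K (Localization.Away x) :=
  ((algebraMap R (Localization.Away x)).comp (algebraMap K R)).toAlgebra

/-- The region `L_i = {(x,y) : 1 ≤ x ≤ a_i, b_i ≤ y ≤ n}` of the grid determined by a
distinguished point `(a_i, b_i)` (1-based coordinates). -/
def ladderRegion (a b : ℕ → ℕ) (n : ℕ) (i : ℕ) : Set (ℕ × ℕ) :=
  {p | 1 ≤ p.1 ∧ p.1 ≤ a i ∧ b i ≤ p.2 ∧ p.2 ≤ n}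

/-- The mixed ladder determinantal ideal `I_t(L)` in `K[L]`. -/
noncomputable def mixedLadderIdeal (K : Type*) [Field K] (V : Set (ℕ × ℕ))
    (a b t : ℕ → ℕ) (n s : ℕ) : Ideal (MvPolynomial V K) :=
  ⨆ i ∈ Set.Icc 1 s, Ideal.span
    {p | ∃ r c : Fin (t i) → ℕ, StrictMono r ∧ StrictMono c ∧
      ∃ h : ∀ x y : Fin (t i), (r x, c y) ∈ ladderRegion a b n i ∧ (r x, c y) ∈ V,
      p = Matrix.det (Matrix.of fun x y => (MvPolynomial.X ⟨(r x, c y), (h x y).2⟩ :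
        MvPolynomial V K))}

/-- The row relabelling of the construction of `L̂`: row `u` is moved just below row `a_k`
(rows strictly between are shifted up by one, all other rows are unchanged). -/
def rowPerm (u ak : ℕ) (i : ℕ) : ℕ :=
  if i < u then i else if i = u then ak else if i ≤ ak then i - 1 else i

/-- The column relabelling of the construction of `L̂`: column `v` is moved just to the left
of column `b_j` (columns in between are shifted right by one, the others unchanged). -/
def colPerm (v bj : ℕ) (c : ℕ) : ℕ :=
  if c < bj then c else if c = v then bj else if c < v then c + 1 else c

/-- The entries of `L` kept in the construction of `L̂`: all entries off row `u` and column
`v`, the entries of row `u` lying in `L_{k+1}` (columns `≥ b_{k+1}`), and the entries of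
column `v` lying in `L_{j-1}` (rows `≤ a_{j-1}`). -/
def keptEntries (L : Set (ℕ × ℕ)) (a b : ℕ → ℕ) (u v j k : ℕ) : Set (ℕ × ℕ) :=
  {p ∈ L | (p.1 ≠ u ∧ p.2 ≠ v) ∨ (p.1 = u ∧ b (k + 1) ≤ p.2) ∨
    (p.2 = v ∧ p.1 ≤ a (j - 1))}

/-- The ladder `L̂` obtained from `L` by deleting the appropriate entries of row `u` and
column `v` and relabelling. -/
def ladderHat (L : Set (ℕ × ℕ)) (a b : ℕ → ℕ) (u v j k : ℕ) : Set (ℕ × ℕ) :=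
  (fun p => (rowPerm u (a k) p.1, colPerm v (b j) p.2)) '' keptEntries L a b u v j k

/-- The extra (free) variables adjoined on the right-hand side:
`x_{a_{j-1}+1,v}, …, x_{a_k,v}` and `x_{u,b_j}, …, x_{u,b_{k+1}-1}`. -/
def extraVars (a b : ℕ → ℕ) (u v j k : ℕ) : Set (ℕ × ℕ) :=
  {p | (p.2 = v ∧ a (j - 1) < p.1 ∧ p.1 ≤ a k) ∨ (p.1 = u ∧ b j ≤ p.2 ∧ p.2 < b (k + 1))}

/-- The ideal `I_r(L̂)` of the ring `K[L̂][extra variables]` (the variables are indexed by the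
sum type `↥L̂ ⊕ ↥E`, the minors being taken in the `L̂`-variables). -/
noncomputable def mixedLadderIdealHat (K : Type*) [Field K] (Lhat E : Set (ℕ × ℕ))
    (a b t : ℕ → ℕ) (n s : ℕ) : Ideal (MvPolynomial (↥Lhat ⊕ ↥E) K) :=
  ⨆ i ∈ Set.Icc 1 s, Ideal.span
    {p | ∃ r c : Fin (t i) → ℕ, StrictMono r ∧ StrictMono c ∧
      ∃ h : ∀ x y : Fin (t i), (r x, c y) ∈ ladderRegion a b n i ∧ (r x, c y) ∈ Lhat,
      p = Matrix.det (Matrix.of fun x y =>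
        (MvPolynomial.X (Sum.inl ⟨(r x, c y), (h x y).2⟩) : MvPolynomial (↥Lhat ⊕ ↥E) K))}


/-- all `t`-minors of `z` with rows in `R`, columns in `C` vanish. -/
def MVan {S : Type*} [CommRing S] (z : ℕ → ℕ → S) (R C : Set ℕ) (t : ℕ) : Prop :=
  ∀ r c : Fin t → ℕ, (∀ x, r x ∈ R) → (∀ y, c y ∈ C) →
    Matrix.det (Matrix.of fun x y => z (r x) (c y)) = 0

section
variable {S : Type*} [CommRing S] {z w : ℕ → ℕ → S} {R C R' C' : Set ℕ} {t : ℕ}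

theorem MVan.comp (h : MVan z R C t) {σ τ : ℕ → ℕ} (hσ : ∀ r ∈ R', σ r ∈ R)
    (hτ : ∀ r ∈ C', τ r ∈ C) : MVan (fun r c => z (σ r) (τ c)) R' C' t :=
  fun r c hr hc => h (fun x => σ (r x)) (fun y => τ (c y)) (fun x => hσ _ (hr x))
    (fun y => hτ _ (hc y))

theorem MVan.congr (h : MVan z R C t) (e : ∀ r ∈ R, ∀ c ∈ C, w r c = z r c) : MVan w R C t := by
  intro r c hr hc
  rw [← h r c hr hc]
  congr 1
  ext x y
  exact e _ (hr x) _ (hc y)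

theorem MVan.transpose (h : MVan z R C t) : MVan (fun c r => z r c) C R t := by
  intro c r hc hr
  rw [← h r c hr hc, ← Matrix.det_transpose]
  rfl

theorem MVan.of_strictMono (h : ∀ r c : Fin t → ℕ, StrictMono r → StrictMono c →
    (∀ x, r x ∈ R) → (∀ y, c y ∈ C) →
    Matrix.det (Matrix.of fun x y => z (r x) (c y)) = 0) : MVan z R C t := by
  intro r c hr hc
  by_cases ir : Function.Injective r
  swap
  · simp only [Function.Injective, not_forall] at ir
    obtain ⟨x, y, e, ne⟩ := ir
    apply Matrix.det_zero_of_row_eq ne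
    ext i
    simp [e]
  by_cases ic : Function.Injective c
  swap
  · simp only [Function.Injective, not_forall] at ic
    obtain ⟨x, y, e, ne⟩ := ic
    apply Matrix.det_zero_of_column_eq ne
    intro i
    simp [e]
  have h1 := h (r ∘ Tuple.sort r) (c ∘ Tuple.sort c)
    ((Tuple.monotone_sort r).strictMono_of_injective (ir.comp (Equiv.injective _)))
    ((Tuple.monotone_sort c).strictMono_of_injective (ic.comp (Equiv.injective _)))
    (fun x => hr _) (fun x => hc _)
  have h2 : (Matrix.of fun x y => z ((r ∘ Tuple.sort r) x) ((c ∘ Tuple.sort c) y)) =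
     ((Matrix.of fun x y => z (r x) (c y)).submatrix (Tuple.sort r) id).submatrix id
        (Tuple.sort c) := rfl
  rw [h2, Matrix.det_permute', Matrix.det_permute] at h1
  have u1 : ∀ π : Equiv.Perm (Fin t), IsUnit (((Equiv.Perm.sign π : ℤˣ) : ℤ) : S) := fun π =>
    (Units.isUnit (Equiv.Perm.sign π)).map (Int.castRingHom S)
  exact ((u1 _).mul_right_eq_zero).1 (((u1 _).mul_right_eq_zero).1 h1)

theorem MVan.addCol (h : MVan z R C t) {v : ℕ} (hv : v ∈ C) (l : ℕ → S) :
    MVan (fun r c => z r c + z r v * l c) R C t := by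
  classical
  intro r c hr hc
  rw [← Matrix.det_transpose]
  have e : (Matrix.of fun x y => z (r x) (c y) + z (r x) v * l (c y)).transpose =
    (fun y x => z (r x) (c y)) + fun y => l (c y) • (fun x => z (r x) v) := by
    ext y x
    simp [mul_comm]
  rw [e]
  change (Matrix.detRowAlternating (R := S) (n := Fin t)).toMultilinearMap _ = 0
  rw [MultilinearMap.map_add_univ]
  apply Finset.sum_eq_zero
  intro s _
  have e2 : s.piecewise (fun y x => z (r x) (c y)) (fun y => l (c y) • (fun x => z (r x) v)) =
     fun y => (s.piecewise (fun _ => 1) (fun y => l (c y)) y : S) •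
       ((fun x => z (r x) (s.piecewise c (fun _ => v) y)) : Fin t → S) := by
    ext y x
    by_cases hy : y ∈ s <;> simp [hy]
  rw [e2, MultilinearMap.map_smul_univ]
  have := h r (s.piecewise c (fun _ => v)) hr (fun y => by
    by_cases hy : y ∈ s <;> simp [hy, hc, hv])
  rw [← Matrix.det_transpose] at this
  have h3 : (Matrix.detRowAlternating (R := S) (n := Fin t)).toMultilinearMap
    (fun y => ((fun x => z (r x) (s.piecewise c (fun _ => v) y)) : Fin t → S)) = 0 := this
  rw [h3, smul_zero]

theorem MVan.addRow (h : MVan z R C t) {u : ℕ} (hu : u ∈ R) (l : ℕ → S) :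
    MVan (fun r c => z r c + z u c * l r) R C t :=
  (h.transpose.addCol hu l).transpose

theorem MVan.succ (h : MVan z R C t) : MVan z R C (t + 1) := by
  intro r c hr hc
  rw [Matrix.det_succ_column_zero]
  apply Finset.sum_eq_zero
  intro i _
  have := h (r ∘ i.succAbove) (c ∘ Fin.succ) (fun _ => hr _) (fun _ => hc _)
  have e : ((Matrix.of fun x y => z (r x) (c y)).submatrix i.succAbove Fin.succ).det = 0 := this
  rw [e, mul_zero]

/-- bordered determinant -/
theorem det_border {t : ℕ} (A : Matrix (Fin t) (Fin t) S) (p p' : S) (hp : p * p' = 1)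
    (q l : Fin t → S) :
    Matrix.det (Matrix.of (Fin.cons (Fin.cons p l) (fun x => Fin.cons (q x) (A x))) :
      Matrix (Fin (t + 1)) (Fin (t + 1)) S) =
    p * Matrix.det (Matrix.of fun x y => A x y - q x * l y * p') := by
  rw [Matrix.det_eq_of_forall_row_eq_smul_add_const (B := Matrix.of (Fin.cons (Fin.cons p l)
    (fun x => Fin.cons 0 (fun y => A x y - q x * l y * p'))))
    (Fin.cons 0 (fun x => q x * p')) 0 (by simp)]
  · rw [Matrix.det_succ_column_zero, Fin.sum_univ_succ]
    simp
    congr 1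
  · intro i y
    refine Fin.cases ?_ (fun i => ?_) i <;> refine Fin.cases ?_ (fun y => ?_) y <;> simp
    · rw [mul_assoc, mul_comm p', hp, mul_one]
    · ring

theorem MVan.pivot (h : MVan w R C (t + 1)) {u v : ℕ} (hu : u ∈ R) (hv : v ∈ C) {p : S}
    (hp : w u v * p = 1) : MVan (fun r c => w r c - w r v * w u c * p) R C t := by
  intro r c hr hc
  have h1 := h (Fin.cons u r) (Fin.cons v c)
    (fun x => by refine Fin.cases ?_ (fun x => ?_) x <;> simp [hu, hr])
    (fun x => by refine Fin.cases ?_ (fun x => ?_) x <;> simp [hv, hc])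
  have h2 := det_border (Matrix.of fun x y => w (r x) (c y)) (w u v) p hp
    (fun x => w (r x) v) (fun y => w u (c y))
  have e : (Matrix.of fun x y => w ((Fin.cons u r : Fin (t+1) → ℕ) x)
      ((Fin.cons v c : Fin (t+1) → ℕ) y)) =
    Matrix.of (Fin.cons (Fin.cons (w u v) (fun y => w u (c y)))
      (fun x => Fin.cons (w (r x) v) ((Matrix.of fun x y => w (r x) (c y)) x))) := by
    ext i y
    refine Fin.cases ?_ (fun i => ?_) i <;> refine Fin.cases ?_ (fun y => ?_) y <;> simp
  rw [e, h2] at h1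
  exact (IsUnit.of_mul_eq_one p hp).mul_right_eq_zero.1 h1

theorem MVan.unpivot (h : MVan z R C t) (q l : ℕ → S) :
    MVan (fun r c => z r c + q r * l c) R C (t + 1) := by
  intro r c hr hc
  have h2 := det_border (Matrix.of fun x y => z (r x) (c y)) 1 1 (one_mul 1)
    (fun x => - q (r x)) (fun y => l (c y))
  simp only [Matrix.of_apply, neg_mul, mul_one, sub_neg_eq_add, one_mul] at h2
  rw [← h2, Matrix.det_succ_row_zero, Fin.sum_univ_succ]
  have h0 := h.succ r c hr hc
  have : ∀ i : Fin (t + 1), ((Matrix.of (Fin.cons (Fin.cons 1 (fun y => l (c y)))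
      (fun x => Fin.cons (- q (r x)) (fun y => z (r x) (c y)))) :
      Matrix (Fin (t + 2)) (Fin (t + 2)) S).submatrix Fin.succ (Fin.succAbove i.succ)).det = 0 := by
    intro i
    rw [Matrix.det_succ_column_zero]
    apply Finset.sum_eq_zero
    intro i' _
    have h3 := h (r ∘ i'.succAbove) (c ∘ i.succAbove) (fun _ => hr _) (fun _ => hc _)
    refine mul_eq_zero_of_right _ ?_
    rw [← h3]
    congr 1
    ext x y
    simp [Fin.succ_succAbove_succ]
  have h0' : ((Matrix.of (Fin.cons (Fin.cons 1 (fun y => l (c y)))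
      (fun x => Fin.cons (- q (r x)) (fun y => z (r x) (c y)))) :
      Matrix (Fin (t + 2)) (Fin (t + 2)) S).submatrix Fin.succ (Fin.succAbove 0)).det = 0 := by
    rw [← h0]
    congr 1
  exact (congrArg₂ (· + ·) (mul_eq_zero_of_right _ h0')
    (Finset.sum_eq_zero fun i _ => mul_eq_zero_of_right _ (this i))).trans (add_zero 0)

end

section
variable {S : Type*} [CommRing S]

open Classical in
/-- The substitution: add `q * W r v * W u c` off row `u` and column `v` inside `P`. -/
noncomputable def pivT (P : ℕ → ℕ → Prop) (u v : ℕ) (W : ℕ → ℕ → S) (q : S) (r c : ℕ) : S :=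
  if P r c ∧ r ≠ u ∧ c ≠ v then W r c + q * W r v * W u c else W r c

/-- The union of the regions containing the pivot. -/
def pivP (a b : ℕ → ℕ) (n j k r c : ℕ) : Prop := ∃ i, j ≤ i ∧ i ≤ k ∧ (r, c) ∈ ladderRegion a b n i

theorem pivT_row_u (P : ℕ → ℕ → Prop) (u v : ℕ) (W : ℕ → ℕ → S) (q : S) (c : ℕ) :
    pivT P u v W q u c = W u c := by simp [pivT]

theorem pivT_col_v (P : ℕ → ℕ → Prop) (u v : ℕ) (W : ℕ → ℕ → S) (q : S) (r : ℕ) :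
    pivT P u v W q r v = W r v := by simp [pivT]

theorem pivT_pivT (P : ℕ → ℕ → Prop) (u v : ℕ) (W : ℕ → ℕ → S) (q q' : S) (h : q + q' = 0)
    (r c : ℕ) : pivT P u v (pivT P u v W q) q' r c = W r c := by
  have e : q' = -q := by linear_combination h
  unfold pivT
  by_cases hc : P r c ∧ r ≠ u ∧ c ≠ v
  · simp only [hc, e, ne_eq, not_true, and_false, false_and, not_false_eq_true, and_self, if_true,
      if_false]
    ring
  · simp only [hc, if_false]

theorem map_pivT {T : Type*} [CommRing T] (F : S →+* T) (P : ℕ → ℕ → Prop) (u v : ℕ)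
    (W : ℕ → ℕ → S) (W' : ℕ → ℕ → T) (q : S) (V : Set (ℕ × ℕ))
    (hF : ∀ r c, (r, c) ∈ V → F (W r c) = W' r c)
    (hV : ∀ r c, P r c → (r, v) ∈ V ∧ (u, c) ∈ V) (r c : ℕ) (hrc : (r, c) ∈ V) :
    F (pivT P u v W q r c) = pivT P u v W' (F q) r c := by
  unfold pivT
  split_ifs with h
  · rw [map_add, map_mul, map_mul, hF _ _ hrc, hF _ _ (hV r c h.1).1, hF _ _ (hV r c h.1).2]
  · exact hF _ _ hrc

theorem MVan.pivT_col {W : ℕ → ℕ → S} {R C : Set ℕ} {t u v : ℕ} {P : ℕ → ℕ → Prop}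
    (h : MVan W R C t) (hv : v ∈ C) (hu : u ∉ R) (T : ℕ → Prop)
    (hP : ∀ r ∈ R, ∀ c ∈ C, P r c ↔ T c) (q : S) : MVan (pivT P u v W q) R C t := by
  classical
  refine (h.addCol hv (fun c => if T c ∧ c ≠ v then q * W u c else 0)).congr ?_
  intro r hr c hc
  have hru : r ≠ u := fun e => hu (e ▸ hr)
  simp only [pivT, hP r hr c hc, hru, ne_eq, not_false_eq_true, true_and]
  split_ifs <;> ring

theorem MVan.pivT_row {W : ℕ → ℕ → S} {R C : Set ℕ} {t u v : ℕ} {P : ℕ → ℕ → Prop}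
    (h : MVan W R C t) (hv : v ∉ C) (hu : u ∈ R) (T : ℕ → Prop)
    (hP : ∀ r ∈ R, ∀ c ∈ C, P r c ↔ T r) (q : S) : MVan (pivT P u v W q) R C t := by
  classical
  refine (h.addRow hu (fun r => if T r ∧ r ≠ u then q * W r v else 0)).congr ?_
  intro r hr c hc
  have hcv : c ≠ v := fun e => hv (e ▸ hc)
  simp only [pivT, hP r hr c hc, hcv, ne_eq, not_false_eq_true, and_true]
  split_ifs <;> ring

theorem MVan.pivT_mid {W : ℕ → ℕ → S} {R C : Set ℕ} {t u v : ℕ} {P : ℕ → ℕ → Prop}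
    (h : MVan W R C t) (ht : 1 ≤ t) (hv : v ∈ C) (hu : u ∈ R)
    (hP : ∀ r ∈ R, ∀ c ∈ C, P r c) {p : S} (hp : W u v * p = 1) :
    MVan (pivT P u v W (-p)) (R \ {u}) (C \ {v}) (t - 1) := by
  obtain ⟨t, rfl⟩ : ∃ t', t = t' + 1 := ⟨t - 1, by omega⟩
  rw [Nat.add_sub_cancel]
  have h1 := h.pivot hu hv hp
  intro r c hr hc
  rw [← h1 r c (fun x => (hr x).1) (fun x => (hc x).1)]
  congr 1
  ext x y
  have h2 : r x ≠ u := (hr x).2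
  have h3 : c y ≠ v := (hc y).2
  simp only [pivT, hP _ (hr x).1 _ (hc y).1, h2, h3, ne_eq, not_false_eq_true, and_true, if_true,
    Matrix.of_apply]
  ring

theorem MVan.pivT_mid_inv {Z : ℕ → ℕ → S} {R C : Set ℕ} {t u v : ℕ} {P : ℕ → ℕ → Prop}
    (ht : 2 ≤ t) (h : MVan Z (R \ {u}) (C \ {v}) (t - 1))
    (hP : ∀ r ∈ R, ∀ c ∈ C, P r c) {p : S} (hp : Z u v * p = 1) :
    MVan (pivT P u v Z p) R C t := by
  classical
  have h1 : MVan (fun r c => if r = u ∨ c = v then 0 else Z r c) R C (t - 1) := by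
    intro r c hr hc
    by_cases hru : ∃ x, r x = u
    · obtain ⟨x, hx⟩ := hru
      exact Matrix.det_eq_zero_of_row_eq_zero x (fun y => by simp [hx])
    by_cases hcv : ∃ x, c x = v
    · obtain ⟨x, hx⟩ := hcv
      exact Matrix.det_eq_zero_of_column_eq_zero x (fun y => by simp [hx])
    push Not at hru hcv
    rw [← h r c (fun x => ⟨hr x, hru x⟩) (fun x => ⟨hc x, hcv x⟩)]
    congr 1
    ext x y
    simp [hru, hcv]
  have h2 := h1.unpivot (fun r => Z r v) (fun c => p * Z u c)
  rw [show t - 1 + 1 = t by omega] at h2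
  refine h2.congr ?_
  intro r hr c hc
  by_cases h3 : r = u
  · subst h3
    simp only [pivT, ne_eq, not_true, false_and, and_false, if_false, true_or, if_true, zero_add]
    rw [← mul_assoc, hp, one_mul]
  by_cases h4 : c = v
  · subst h4
    simp only [pivT, ne_eq, not_true, and_false, if_false, or_true, if_true, zero_add]
    rw [mul_comm p, hp, mul_one]
  simp only [pivT, hP r hr c hc, h3, h4, ne_eq, not_false_eq_true, and_true, if_true, or_false,
    if_false]
  ring

end

/-- generic ladder ideal -/
noncomputable def genIdeal {A : Type*} [CommRing A] (V : Set (ℕ × ℕ)) (ξ : V → A)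
    (a b t : ℕ → ℕ) (n s : ℕ) : Ideal A :=
  ⨆ i ∈ Set.Icc 1 s, Ideal.span
    {p | ∃ r c : Fin (t i) → ℕ, StrictMono r ∧ StrictMono c ∧
      ∃ h : ∀ x y : Fin (t i), (r x, c y) ∈ ladderRegion a b n i ∧ (r x, c y) ∈ V,
      p = Matrix.det (Matrix.of fun x y => ξ ⟨(r x, c y), (h x y).2⟩)}

theorem genIdeal_le_ker {A S : Type*} [CommRing A] [CommRing S] (f : A →+* S)
    (V : Set (ℕ × ℕ)) (ξ : V → A) (a b t : ℕ → ℕ) (n s : ℕ) (w : ℕ → ℕ → S)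
    (hw : ∀ p : V, f (ξ p) = w p.1.1 p.1.2)
    (H : ∀ i ∈ Set.Icc 1 s, MVan w (Set.Icc 1 (a i)) (Set.Icc (b i) n) (t i)) :
    ∀ x ∈ genIdeal V ξ a b t n s, f x = 0 := by
  suffices h : genIdeal V ξ a b t n s ≤ RingHom.ker f from fun x hx => h hx
  refine iSup₂_le fun i hi => Ideal.span_le.2 ?_
  rintro _ ⟨r, c, -, -, h, rfl⟩
  change f _ = 0
  rw [RingHom.map_det]
  rw [← H i hi r c (fun x => ⟨(h x x).1.1, (h x x).1.2.1⟩) (fun x => ⟨(h x x).1.2.2.1, (h x x).1.2.2.2⟩)]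
  congr 1
  ext x y
  exact hw _

theorem genIdeal_MVan {A S : Type*} [CommRing A] [CommRing S] (f : A →+* S)
    (V : Set (ℕ × ℕ)) (ξ : V → A) (a b t : ℕ → ℕ) (n s : ℕ) (w : ℕ → ℕ → S)
    (hw : ∀ p : V, f (ξ p) = w p.1.1 p.1.2)
    (H : ∀ x ∈ genIdeal V ξ a b t n s, f x = 0)
    (i : ℕ) (hi : i ∈ Set.Icc 1 s)
    (hV : ladderRegion a b n i ⊆ V) : MVan w (Set.Icc 1 (a i)) (Set.Icc (b i) n) (t i) := by
  apply MVan.of_strictMono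
  intro r c mr mc hr hc
  have h : ∀ x y : Fin (t i), (r x, c y) ∈ ladderRegion a b n i ∧ (r x, c y) ∈ V := by
    intro x y
    have : (r x, c y) ∈ ladderRegion a b n i := ⟨(hr x).1, (hr x).2, (hc y).1, (hc y).2⟩
    exact ⟨this, hV this⟩
  have h1 := H (Matrix.det (Matrix.of fun x y => ξ ⟨(r x, c y), (h x y).2⟩)) (by
    refine (le_iSup₂ (f := fun i (_ : i ∈ Set.Icc 1 s) => Ideal.span
    {p | ∃ r c : Fin (t i) → ℕ, StrictMono r ∧ StrictMono c ∧
      ∃ h : ∀ x y : Fin (t i), (r x, c y) ∈ ladderRegion a b n i ∧ (r x, c y) ∈ V,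
      p = Matrix.det (Matrix.of fun x y => ξ ⟨(r x, c y), (h x y).2⟩)}) i hi) ?_
    exact Ideal.subset_span ⟨r, c, mr, mc, h, rfl⟩)
  rw [RingHom.map_det] at h1
  rw [← h1]
  congr 1
  ext x y
  exact (hw ⟨(r x, c y), (h x y).2⟩).symm

/-- the canonical map to a localization -/
noncomputable def genLoc {R : Type*} [CommRing R] (M : Submonoid R) : R →+* Localization M :=
  algebraMap R (Localization M)

theorem genLoc_lift {R T : Type*} [CommRing R] [CommRing T] (M : Submonoid R) (f : R →+* T)
    (h : ∀ y : M, IsUnit (f y)) : ∃ F : Localization M →+* T, ∀ y, F (genLoc M y) = f y :=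
  ⟨IsLocalization.lift (M := M) h, fun y => IsLocalization.lift_eq h y⟩

theorem genLoc_ext {R T : Type*} [CommRing R] [CommRing T] (M : Submonoid R)
    (F G : Localization M →+* T) (h : ∀ y, F (genLoc M y) = G (genLoc M y)) : F = G :=
  IsLocalization.ringHom_ext M (RingHom.ext h)

theorem genLoc_unit {R : Type*} [CommRing R] (M : Submonoid R) (y : R) (h : y ∈ M) :
    IsUnit (genLoc M y) := IsLocalization.map_units (Localization M) ⟨y, h⟩

/-- the canonical map `A → (A/I)_x` -/
noncomputable def locQ {A : Type*} [CommRing A] (I : Ideal A) (x : A) :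
    A →+* Localization.Away (Ideal.Quotient.mk I x) := (genLoc _).comp (Ideal.Quotient.mk I)

theorem locQ_ker {A : Type*} [CommRing A] (I : Ideal A) (x : A) : ∀ y ∈ I, locQ I x y = 0 := by
  intro y hy
  rw [locQ, RingHom.comp_apply, Ideal.Quotient.eq_zero_iff_mem.2 hy, map_zero]

theorem locQ_unit {A : Type*} [CommRing A] (I : Ideal A) (x : A) : IsUnit (locQ I x x) :=
  genLoc_unit _ _ (Submonoid.mem_powers _)

theorem locQ_alg {K A : Type*} [CommRing A] [Field K] [Algebra K A] (I : Ideal A) (x : A) (y : K) :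
    locQ I x (algebraMap K A y) = algebraMap K (Localization.Away (Ideal.Quotient.mk I x)) y :=
  rfl

theorem locQ_lift {A T : Type*} [CommRing A] [CommRing T] (I : Ideal A) (x : A) (f : A →+* T)
    (hI : ∀ y ∈ I, f y = 0) (hx : IsUnit (f x)) :
    ∃ F : Localization.Away (Ideal.Quotient.mk I x) →+* T, ∀ y, F (locQ I x y) = f y := by
  obtain ⟨F, hF⟩ := genLoc_lift (Submonoid.powers (Ideal.Quotient.mk I x))
    (Ideal.Quotient.lift I f hI) (by
      rintro ⟨_, m, rfl⟩
      simpa using hx.pow m)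
  exact ⟨F, fun y => (hF _).trans (by simp)⟩

theorem locQ_ext {A T : Type*} [CommRing A] [CommRing T] (I : Ideal A) (x : A)
    (F G : Localization.Away (Ideal.Quotient.mk I x) →+* T)
    (h : ∀ y, F (locQ I x y) = G (locQ I x y)) : F = G := by
  apply genLoc_ext
  intro y
  obtain ⟨y, rfl⟩ := Ideal.Quotient.mk_surjective y
  exact h y

/-- inverse of `rowPerm` -/
def rowInv (u ak i : ℕ) : ℕ :=
  if i < u then i else if i < ak then i + 1 else if i = ak then u else i

/-- inverse of `colPerm` -/
def colInv (v bj c : ℕ) : ℕ :=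
  if c < bj then c else if c = bj then v else if c ≤ v then c - 1 else c

theorem rowInv_rowPerm {u ak : ℕ} (h : u ≤ ak) (i : ℕ) : rowInv u ak (rowPerm u ak i) = i := by
  unfold rowInv rowPerm
  split_ifs <;> omega

theorem colInv_colPerm {v bj : ℕ} (h : bj ≤ v) (i : ℕ) : colInv v bj (colPerm v bj i) = i := by
  unfold colInv colPerm
  split_ifs <;> omega

theorem rowPerm_rowInv {u ak : ℕ} (h : u ≤ ak) (i : ℕ) : rowPerm u ak (rowInv u ak i) = i := by
  unfold rowInv rowPerm
  split_ifs <;> omega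

theorem colPerm_colInv {v bj : ℕ} (h : bj ≤ v) (i : ℕ) : colPerm v bj (colInv v bj i) = i := by
  unfold colInv colPerm
  split_ifs <;> omega

/-- Processed combinatorial data. -/
structure LData (n s : ℕ) (L : Set (ℕ × ℕ)) (a b : ℕ → ℕ) (u v j k : ℕ) : Prop where
  hj : 1 ≤ j
  hjk : j ≤ k
  hk : k ≤ s
  mono : ∀ i i', 1 ≤ i → i ≤ i' → i' ≤ s → a i ≤ a i' ∧ b i ≤ b i'
  mid : ∀ i, j ≤ i → i ≤ k → 1 ≤ u ∧ u ≤ a i ∧ b i ≤ v ∧ v ≤ n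
  lo : ∀ i, 1 ≤ i → i < j → a i ≤ a (j - 1)
  aj : a (j - 1) < u
  hi : ∀ i, k < i → i ≤ s → b (k + 1) ≤ b i
  bk : v < b (k + 1)
  bk' : b (k + 1) ≤ n + 1
  memL : ∀ r c, (r, c) ∈ L ↔ ∃ i, 1 ≤ i ∧ i ≤ s ∧ 1 ≤ r ∧ r ≤ a i ∧ b i ≤ c ∧ c ≤ n

namespace LData
variable {n s : ℕ} {L : Set (ℕ × ℕ)} {a b : ℕ → ℕ} {u v j k : ℕ}

/-- rows of the `i`-th kept block -/
def Rk (a : ℕ → ℕ) (u j k i : ℕ) : Set ℕ :=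
  if j ≤ i ∧ i ≤ k then Set.Icc 1 (a i) \ {u} else Set.Icc 1 (a i)

/-- columns of the `i`-th kept block -/
def Ck (b : ℕ → ℕ) (n v j k i : ℕ) : Set ℕ :=
  if j ≤ i ∧ i ≤ k then Set.Icc (b i) n \ {v} else Set.Icc (b i) n

theorem row_fwd (D : LData n s L a b u v j k) {i r : ℕ} (h1 : 1 ≤ i) (hs : i ≤ s)
    (hr : r ∈ Rk a u j k i) :
    rowPerm u (a k) r ∈ Set.Icc 1 (if j ≤ i ∧ i ≤ k then a i - 1 else a i) := by
  have m1 := D.mid k D.hjk le_rfl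
  have m2 := D.aj
  by_cases h : j ≤ i ∧ i ≤ k
  · have m3 := D.mid i h.1 h.2
    have m4 := (D.mono i k h1 h.2 D.hk).1
    simp only [Rk, h, and_self, if_true, Set.mem_sdiff, Set.mem_Icc, Set.mem_singleton_iff] at hr ⊢
    unfold rowPerm
    split_ifs <;> omega
  · simp only [Rk, h, if_false, Set.mem_Icc] at hr ⊢
    rcases lt_or_ge i j with h' | h'
    · have m3 := D.lo i h1 h'
      unfold rowPerm
      split_ifs <;> omega
    · have m3 := (D.mono k i (D.hj.trans D.hjk) (by omega) hs).1
      unfold rowPerm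
      split_ifs <;> omega

theorem row_bwd (D : LData n s L a b u v j k) {i r : ℕ} (h1 : 1 ≤ i) (hs : i ≤ s)
    (hr : r ∈ Set.Icc 1 (if j ≤ i ∧ i ≤ k then a i - 1 else a i)) :
    rowInv u (a k) r ∈ Rk a u j k i := by
  have m1 := D.mid k D.hjk le_rfl
  have m2 := D.aj
  by_cases h : j ≤ i ∧ i ≤ k
  · have m3 := D.mid i h.1 h.2
    have m4 := (D.mono i k h1 h.2 D.hk).1
    simp only [Rk, h, and_self, if_true, Set.mem_sdiff, Set.mem_Icc, Set.mem_singleton_iff] at hr ⊢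
    unfold rowInv
    split_ifs <;> omega
  · simp only [Rk, h, if_false, Set.mem_Icc] at hr ⊢
    rcases lt_or_ge i j with h' | h'
    · have m3 := D.lo i h1 h'
      unfold rowInv
      split_ifs <;> omega
    · have m3 := (D.mono k i (D.hj.trans D.hjk) (by omega) hs).1
      unfold rowInv
      split_ifs <;> omega

theorem col_fwd (D : LData n s L a b u v j k) {i r : ℕ} (h1 : 1 ≤ i) (hs : i ≤ s)
    (hr : r ∈ Ck b n v j k i) :
    colPerm v (b j) r ∈ Set.Icc (if j ≤ i ∧ i ≤ k then b i + 1 else b i) n := by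
  have m1 := D.mid j le_rfl D.hjk
  have m2 := D.bk
  by_cases h : j ≤ i ∧ i ≤ k
  · have m3 := D.mid i h.1 h.2
    have m4 := (D.mono j i D.hj h.1 hs).2
    simp only [Ck, h, and_self, if_true, Set.mem_sdiff, Set.mem_Icc, Set.mem_singleton_iff] at hr ⊢
    unfold colPerm
    split_ifs <;> omega
  · simp only [Ck, h, if_false, Set.mem_Icc] at hr ⊢
    rcases lt_or_ge i j with h' | h'
    · have m3 := (D.mono i j h1 h'.le (D.hjk.trans D.hk)).2
      unfold colPerm
      split_ifs <;> omega
    · have m3 := D.hi i (by omega) hs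
      unfold colPerm
      split_ifs <;> omega

theorem col_bwd (D : LData n s L a b u v j k) {i r : ℕ} (h1 : 1 ≤ i) (hs : i ≤ s)
    (hr : r ∈ Set.Icc (if j ≤ i ∧ i ≤ k then b i + 1 else b i) n) :
    colInv v (b j) r ∈ Ck b n v j k i := by
  have m1 := D.mid j le_rfl D.hjk
  have m2 := D.bk
  by_cases h : j ≤ i ∧ i ≤ k
  · have m3 := D.mid i h.1 h.2
    have m4 := (D.mono j i D.hj h.1 hs).2
    simp only [Ck, h, and_self, if_true, Set.mem_sdiff, Set.mem_Icc, Set.mem_singleton_iff] at hr ⊢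
    unfold colInv
    split_ifs <;> omega
  · simp only [Ck, h, if_false, Set.mem_Icc] at hr ⊢
    rcases lt_or_ge i j with h' | h'
    · have m3 := (D.mono i j h1 h'.le (D.hjk.trans D.hk)).2
      unfold colInv
      split_ifs <;> omega
    · have m3 := D.hi i (by omega) hs
      unfold colInv
      split_ifs <;> omega

theorem mem_kept (D : LData n s L a b u v j k) {i r c : ℕ} (h1 : 1 ≤ i) (hs : i ≤ s)
    (hr : r ∈ Rk a u j k i) (hc : c ∈ Ck b n v j k i) : (r, c) ∈ keptEntries L a b u v j k := by
  by_cases h : j ≤ i ∧ i ≤ k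
  · simp only [Rk, Ck, h, and_self, if_true, Set.mem_sdiff, Set.mem_Icc,
      Set.mem_singleton_iff] at hr hc
    exact ⟨(D.memL r c).2 ⟨i, by omega⟩, Or.inl ⟨hr.2, hc.2⟩⟩
  · simp only [Rk, Ck, h, if_false, Set.mem_Icc] at hr hc
    refine ⟨(D.memL r c).2 ⟨i, by omega⟩, ?_⟩
    have m1 := D.aj
    have m2 := D.bk
    rcases lt_or_ge i j with h' | h'
    · have m3 := D.lo i h1 h'
      simp only
      omega
    · have m3 := D.hi i (by omega) hs
      simp only
      omega

theorem cover (D : LData n s L a b u v j k) {r c : ℕ} (h : (r, c) ∈ L) :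
    (r, c) ∈ keptEntries L a b u v j k ∨ (r, c) ∈ extraVars a b u v j k := by
  obtain ⟨i, h1, h2, h3⟩ := (D.memL r c).1 h
  by_cases hr : r = u
  · subst hr
    by_cases hc : b (k + 1) ≤ c
    · exact Or.inl ⟨h, Or.inr (Or.inl ⟨rfl, hc⟩)⟩
    · refine Or.inr (Or.inr ⟨rfl, ?_, by simpa using hc⟩)
      have m1 := D.aj
      rcases lt_or_ge i j with h' | h'
      · have := D.lo i h1 h'
        omega
      · have := (D.mono j i D.hj h' h2).2
        simp only
        omega
  by_cases hc : c = v
  · subst hc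
    by_cases hc : r ≤ a (j - 1)
    · exact Or.inl ⟨h, Or.inr (Or.inr ⟨rfl, hc⟩)⟩
    · refine Or.inr (Or.inl ⟨rfl, by simpa using hc, ?_⟩)
      have m1 := D.bk
      rcases lt_or_ge k i with h' | h'
      · have := D.hi i h' h2
        omega
      · have := (D.mono i k h1 h' D.hk).1
        simp only
        omega
  exact Or.inl ⟨h, Or.inl ⟨hr, hc⟩⟩

theorem extra_sub (D : LData n s L a b u v j k) {r c : ℕ} (h : (r, c) ∈ extraVars a b u v j k) :
    (r, c) ∈ L := by
  have m1 := D.mid j le_rfl D.hjk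
  have m2 := D.mid k D.hjk le_rfl
  have := D.hj
  have := D.hjk
  have := D.hk
  have := D.bk'
  rcases h with h | h
  · simp only at h
    exact (D.memL r c).2 ⟨k, by omega⟩
  · simp only at h
    exact (D.memL r c).2 ⟨j, by omega⟩

theorem disj (D : LData n s L a b u v j k) {r c : ℕ} (h : (r, c) ∈ extraVars a b u v j k) :
    (r, c) ∉ keptEntries L a b u v j k := by
  rintro ⟨_, h'⟩
  have := D.aj
  have := D.bk
  rcases h with h | h <;> simp only at h h' <;> omega

theorem pivP_sub (D : LData n s L a b u v j k) (r c : ℕ) (h : pivP a b n j k r c) :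
    (r, v) ∈ L ∧ (u, c) ∈ L := by
  obtain ⟨i, h1, h2, h3⟩ := h
  have m := D.mid i h1 h2
  simp only [ladderRegion, Set.mem_ofPred_eq] at h3
  have := D.hj
  have := D.hk
  exact ⟨(D.memL _ _).2 ⟨i, by omega⟩, (D.memL _ _).2 ⟨i, by omega⟩⟩

theorem pivP_lo (D : LData n s L a b u v j k) {i r c : ℕ} (h1 : 1 ≤ i) (h2 : i < j)
    (hr : r ∈ Set.Icc 1 (a i)) (hc : c ∈ Set.Icc (b i) n) : pivP a b n j k r c ↔ b j ≤ c := by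
  simp only [Set.mem_Icc] at hr hc
  constructor
  · rintro ⟨i', g1, g2, g3⟩
    simp only [ladderRegion, Set.mem_ofPred_eq] at g3
    have := (D.mono j i' D.hj g1 (g2.trans D.hk)).2
    omega
  · intro h
    have := (D.mono i j h1 h2.le (D.hjk.trans D.hk)).1
    refine ⟨j, le_rfl, D.hjk, ?_⟩
    simp only [ladderRegion, Set.mem_ofPred_eq]
    omega

theorem pivP_hi (D : LData n s L a b u v j k) {i r c : ℕ} (h1 : k < i) (h2 : i ≤ s)
    (hr : r ∈ Set.Icc 1 (a i)) (hc : c ∈ Set.Icc (b i) n) : pivP a b n j k r c ↔ r ≤ a k := by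
  simp only [Set.mem_Icc] at hr hc
  constructor
  · rintro ⟨i', g1, g2, g3⟩
    simp only [ladderRegion, Set.mem_ofPred_eq] at g3
    have := (D.mono i' k (D.hj.trans g1) g2 D.hk).1
    omega
  · intro h
    have := (D.mono k i (D.hj.trans D.hjk) h1.le h2).2
    refine ⟨k, D.hjk, le_rfl, ?_⟩
    simp only [ladderRegion, Set.mem_ofPred_eq]
    omega

variable {S : Type*} [CommRing S]

theorem MVan_side (D : LData n s L a b u v j k) {i t : ℕ} (h1 : 1 ≤ i) (h2 : i ≤ s)
    (h : ¬ (j ≤ i ∧ i ≤ k)) {W : ℕ → ℕ → S} (q : S)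
    (hW : MVan W (Set.Icc 1 (a i)) (Set.Icc (b i) n) t) :
    MVan (pivT (pivP a b n j k) u v W q) (Set.Icc 1 (a i)) (Set.Icc (b i) n) t := by
  have m1 := D.mid j le_rfl D.hjk
  have m2 := D.mid k D.hjk le_rfl
  have m3 := D.aj
  have m4 := D.bk
  rcases lt_or_ge i j with h' | h'
  · have g1 := D.lo i h1 h'
    have g2 := (D.mono i j h1 h'.le (D.hjk.trans D.hk)).2
    exact hW.pivT_col (Set.mem_Icc.2 (by omega)) (fun e => by rw [Set.mem_Icc] at e; omega)
      (fun c => b j ≤ c) (fun r hr c hc => D.pivP_lo h1 h' hr hc) q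
  · have g1 := D.hi i (by omega) h2
    have g2 := (D.mono k i (D.hj.trans D.hjk) (by omega) h2).1
    exact hW.pivT_row (fun e => by rw [Set.mem_Icc] at e; omega) (Set.mem_Icc.2 (by omega))
      (fun r => r ≤ a k) (fun r hr c hc => D.pivP_hi (by omega) h2 hr hc) q

theorem MVan_fwd (D : LData n s L a b u v j k) {i t : ℕ} (h1 : 1 ≤ i) (h2 : i ≤ s) (ht : 1 ≤ t)
    {W : ℕ → ℕ → S} {p : S} (hp : W u v * p = 1)
    (hW : MVan W (Set.Icc 1 (a i)) (Set.Icc (b i) n) t) :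
    MVan (pivT (pivP a b n j k) u v W (-p)) (Rk a u j k i) (Ck b n v j k i)
      (if j ≤ i ∧ i ≤ k then t - 1 else t) := by
  by_cases h : j ≤ i ∧ i ≤ k
  · have m := D.mid i h.1 h.2
    simp only [Rk, Ck, h, and_self, if_true]
    exact hW.pivT_mid ht (Set.mem_Icc.2 (by omega)) (Set.mem_Icc.2 (by omega))
      (fun r hr c hc => ⟨i, h.1, h.2, hr.1, hr.2, hc.1, hc.2⟩) hp
  · simp only [Rk, Ck, h, if_false]
    exact D.MVan_side h1 h2 h _ hW

theorem MVan_bwd (D : LData n s L a b u v j k) {i t : ℕ} (h1 : 1 ≤ i) (h2 : i ≤ s)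
    (ht : j ≤ i → i ≤ k → 2 ≤ t)
    {Z : ℕ → ℕ → S} {p : S} (hp : Z u v * p = 1)
    (hZ : MVan Z (Rk a u j k i) (Ck b n v j k i) (if j ≤ i ∧ i ≤ k then t - 1 else t)) :
    MVan (pivT (pivP a b n j k) u v Z p) (Set.Icc 1 (a i)) (Set.Icc (b i) n) t := by
  by_cases h : j ≤ i ∧ i ≤ k
  · simp only [Rk, Ck, h, and_self, if_true] at hZ
    exact MVan.pivT_mid_inv (ht h.1 h.2) hZ
      (fun r hr c hc => ⟨i, h.1, h.2, hr.1, hr.2, hc.1, hc.2⟩) hp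
  · simp only [Rk, Ck, h, if_false] at hZ
    exact D.MVan_side h1 h2 h _ hZ

end LData

/-- **localization lemma.** Let `L` be a one-sided ladder with distinguished
points `(a_1,b_1),…,(a_s,b_s)` and sizes `t`, and let `(u,v) ∈ L` lie exactly in the regions
`L_j,…,L_k`, with `t_i ≥ 2` for `j ≤ i ≤ k`.  Let `L̂` be the modified ladder, with
distinguished points `(a_i - 1, b_i + 1)` for `j ≤ i ≤ k` (the others unchanged) and sizes
`r = (t_1,…,t_{j-1}, t_j - 1, …, t_k - 1, t_{k+1},…,t_s)`.  Then there is a `K`-algebra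
isomorphism
`K[L]/I_t(L)[x_{u,v}⁻¹] ≅ K[L̂]/I_r(L̂)[x_{a_{j-1}+1,v},…,x_{a_k,v},x_{u,b_j},…,x_{u,b_{k+1}-1},x_{u,v}⁻¹]`. -/
theorem mixedLadderIdeal_localization (m n s : ℕ) (hm : 1 ≤ m) (hmn : m ≤ n) (hs : 1 ≤ s)
    (L : Set (ℕ × ℕ)) (a b t : ℕ → ℕ) (u v j k : ℕ)
    (hLsub : L ⊆ Set.Icc 1 m ×ˢ Set.Icc 1 n)
    (hrange : ∀ i ∈ Set.Icc 1 s, 1 ≤ a i ∧ a i ≤ m ∧ 1 ≤ b i ∧ b i ≤ n)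
    (hmono : ∀ i, 1 ≤ i → i < s → a i ≤ a (i + 1) ∧ b i ≤ b (i + 1))
    (hborder : ∀ i ∈ Set.Icc 1 s, (a i, b i) ∈ L ∧ (a i + 1, b i - 1) ∉ L)
    (hdecomp : L = ⋃ i ∈ Set.Icc 1 s, ladderRegion a b n i)
    (ha0 : a 0 = 0) (hbtop : b (s + 1) = n + 1)
    (hjk : 1 ≤ j ∧ j ≤ k ∧ k ≤ s)
    (ht2 : ∀ i, j ≤ i → i ≤ k → 2 ≤ t i)
    (hsize : ∀ i ∈ Set.Icc 1 s, 1 ≤ t i ∧ t i ≤ min (a i) (m - b i + 1))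
    (hexact : ∀ i ∈ Set.Icc 1 s, ((u, v) ∈ ladderRegion a b n i ↔ j ≤ i ∧ i ≤ k))
    (hLuv : (u, v) ∈ L)
    (hEuv : (u, v) ∈ extraVars a b u v j k) :
    Nonempty
      ((Localization.Away
          ((Ideal.Quotient.mk (mixedLadderIdeal K L a b t n s))
            (MvPolynomial.X ⟨(u, v), hLuv⟩))) ≃ₐ[K]
       (Localization.Away
          ((Ideal.Quotient.mk (mixedLadderIdealHat K
              (ladderHat L a b u v j k) (extraVars a b u v j k)
              (fun i => if j ≤ i ∧ i ≤ k then a i - 1 else a i)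
              (fun i => if j ≤ i ∧ i ≤ k then b i + 1 else b i)
              (fun i => if j ≤ i ∧ i ≤ k then t i - 1 else t i) n s))
            (MvPolynomial.X (Sum.inr ⟨(u, v), hEuv⟩))))) := by

  classical
  obtain ⟨hj1, hjk', hks⟩ := hjk
  have mono : ∀ i i', 1 ≤ i → i ≤ i' → i' ≤ s → a i ≤ a i' ∧ b i ≤ b i' := by
    intro i i' h1 h2 h3
    induction i', h2 using Nat.le_induction with
    | base => exact ⟨le_rfl, le_rfl⟩
    | succ d hd ih =>
      have := ih (by omega)
      have := hmono d (by omega) (by omega)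
      omega
  have memL : ∀ r c, (r, c) ∈ L ↔ ∃ i, 1 ≤ i ∧ i ≤ s ∧ 1 ≤ r ∧ r ≤ a i ∧ b i ≤ c ∧ c ≤ n := by
    intro r c
    rw [hdecomp]
    simp only [Set.mem_iUnion, ladderRegion, Set.mem_ofPred_eq, Set.mem_Icc, exists_prop, and_assoc]
  have mid : ∀ i, j ≤ i → i ≤ k → 1 ≤ u ∧ u ≤ a i ∧ b i ≤ v ∧ v ≤ n := fun i h1 h2 =>
    (hexact i ⟨by omega, by omega⟩).2 ⟨h1, h2⟩
  have mj := mid j le_rfl hjk'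
  have mk := mid k hjk' le_rfl
  have D : LData n s L a b u v j k := by
    refine ⟨hj1, hjk', hks, mono, mid, ?_, ?_, ?_, ?_, ?_, memL⟩
    · intro i h1 h2
      exact (mono i (j - 1) h1 (by omega) (by omega)).1
    · rcases Nat.lt_or_ge 1 j with h | h
      · by_contra hc
        have h1 := (mono (j - 1) j (by omega) (by omega) (by omega)).2
        have := (hexact (j - 1) ⟨by omega, by omega⟩).1
          ⟨mj.1, by simpa using hc, by simp only; omega, mj.2.2.2⟩
        omega
      · rw [show j - 1 = 0 by omega, ha0]
        omega
    · intro i h1 h2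
      exact (mono (k + 1) i (by omega) h1 h2).2
    · rcases Nat.lt_or_ge k s with h | h
      · by_contra hc
        have h1 := (mono k (k + 1) (by omega) (by omega) (by omega)).1
        have := (hexact (k + 1) ⟨by omega, by omega⟩).1
          ⟨mj.1, by simp only; omega, by simpa using hc, mj.2.2.2⟩
        omega
      · rw [show k = s by omega, hbtop]
        omega
    · rcases Nat.lt_or_ge k s with h | h
      · have := hrange (k + 1) ⟨by omega, by omega⟩
        omega
      · rw [show k = s by omega, hbtop]
  set I := mixedLadderIdeal K L a b t n s with hI
  set J := mixedLadderIdealHat K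
              (ladderHat L a b u v j k) (extraVars a b u v j k)
              (fun i => if j ≤ i ∧ i ≤ k then a i - 1 else a i)
              (fun i => if j ≤ i ∧ i ≤ k then b i + 1 else b i)
              (fun i => if j ≤ i ∧ i ≤ k then t i - 1 else t i) n s with hJ
  have hI' : I = genIdeal L (fun p => MvPolynomial.X p) a b t n s := rfl
  have hJ' : J = genIdeal (ladderHat L a b u v j k) (fun p => MvPolynomial.X (Sum.inl p)) 
              (fun i => if j ≤ i ∧ i ≤ k then a i - 1 else a i)
              (fun i => if j ≤ i ∧ i ≤ k then b i + 1 else b i)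
              (fun i => if j ≤ i ∧ i ≤ k then t i - 1 else t i) n s := rfl
  clear_value I J
  let SA := Localization.Away (Ideal.Quotient.mk I (MvPolynomial.X ⟨(u, v), hLuv⟩))
  let SB := Localization.Away (Ideal.Quotient.mk J (MvPolynomial.X (Sum.inr ⟨(u, v), hEuv⟩)))
  let α : MvPolynomial L K →+* SA := locQ I (MvPolynomial.X ⟨(u, v), hLuv⟩)
  let β : MvPolynomial (↥(ladderHat L a b u v j k) ⊕ ↥(extraVars a b u v j k)) K →+* SB :=
    locQ J (MvPolynomial.X (Sum.inr ⟨(u, v), hEuv⟩))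
  obtain ⟨pa, hpa⟩ := (locQ_unit I (MvPolynomial.X ⟨(u, v), hLuv⟩)).exists_right_inv
  obtain ⟨pb, hpb⟩ := (locQ_unit J (MvPolynomial.X (Sum.inr ⟨(u, v), hEuv⟩))).exists_right_inv
  change α _ * pa = 1 at hpa
  change β _ * pb = 1 at hpb
  have hke : ∀ r c, (r, c) ∈ keptEntries L a b u v j k →
      (rowPerm u (a k) r, colPerm v (b j) c) ∈ ladderHat L a b u v j k :=
    fun r c h => Set.mem_image_of_mem _ h
  let W : ℕ → ℕ → SA := fun r c =>
    if h : (r, c) ∈ L then α (MvPolynomial.X ⟨(r, c), h⟩) else 0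
  let zh : ℕ → ℕ → SB := fun r c =>
    if h : (r, c) ∈ ladderHat L a b u v j k then β (MvPolynomial.X (Sum.inl ⟨(r, c), h⟩)) else 0
  let Z : ℕ → ℕ → SB := fun r c =>
    if (r, c) ∈ keptEntries L a b u v j k then zh (rowPerm u (a k) r) (colPerm v (b j) c)
    else if h : (r, c) ∈ extraVars a b u v j k then β (MvPolynomial.X (Sum.inr ⟨(r, c), h⟩)) else 0
  let P := pivP a b n j k
  have hW : ∀ p : L, W p.1.1 p.1.2 = α (MvPolynomial.X p) := by
    rintro ⟨⟨r, c⟩, h⟩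
    exact dif_pos h
  have hzh : ∀ p : ladderHat L a b u v j k,
      zh p.1.1 p.1.2 = β (MvPolynomial.X (Sum.inl p)) := by
    rintro ⟨⟨r, c⟩, h⟩
    exact dif_pos h
  have hZk : ∀ r c, (r, c) ∈ keptEntries L a b u v j k →
      Z r c = zh (rowPerm u (a k) r) (colPerm v (b j) c) := fun r c h => if_pos h
  have hZe : ∀ p : extraVars a b u v j k, Z p.1.1 p.1.2 = β (MvPolynomial.X (Sum.inr p)) := by
    rintro ⟨⟨r, c⟩, h⟩
    exact (if_neg (D.disj h)).trans (dif_pos h)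
  have hWuv : W u v * pa = 1 := by rw [← hpa]; exact congrArg (· * pa) (hW ⟨(u, v), hLuv⟩)
  have hZuv : Z u v * pb = 1 := by rw [← hpb]; exact congrArg (· * pb) (hZe ⟨(u, v), hEuv⟩)
  clear_value W Z zh
  let w := pivT P u v Z pb
  let z := pivT P u v W (-pa)
  have huk : u ≤ a k := mk.2.1
  have hvj : b j ≤ v := mj.2.2.1
  -- minors vanish
  have hsubI : ∀ i ∈ Set.Icc 1 s, ladderRegion a b n i ⊆ L := by
    rintro i hi ⟨r, c⟩ h
    exact (memL r c).2 ⟨i, hi.1, hi.2, h.1, h.2.1, h.2.2.1, h.2.2.2⟩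
  have hWM : ∀ i ∈ Set.Icc 1 s, MVan W (Set.Icc 1 (a i)) (Set.Icc (b i) n) (t i) := by
    intro i hi
    refine genIdeal_MVan α L (fun p => MvPolynomial.X p) a b t n s W (fun p => (hW p).symm) ?_ i hi
      (hsubI i hi)
    rw [← hI']
    exact locQ_ker I _
  have hZM : ∀ i ∈ Set.Icc 1 s, MVan Z (LData.Rk a u j k i) (LData.Ck b n v j k i)
      (if j ≤ i ∧ i ≤ k then t i - 1 else t i) := by
    intro i hi
    have h1 := genIdeal_MVan β (ladderHat L a b u v j k) (fun p => MvPolynomial.X (Sum.inl p))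
              (fun i => if j ≤ i ∧ i ≤ k then a i - 1 else a i)
              (fun i => if j ≤ i ∧ i ≤ k then b i + 1 else b i)
              (fun i => if j ≤ i ∧ i ≤ k then t i - 1 else t i) n s zh (fun p => (hzh p).symm)
              (by rw [← hJ']; exact locQ_ker J _) i hi (by
        rintro ⟨r, c⟩ h
        have g := hke _ _ (D.mem_kept hi.1 hi.2 (D.row_bwd hi.1 hi.2 ⟨h.1, h.2.1⟩)
          (D.col_bwd hi.1 hi.2 ⟨h.2.2.1, h.2.2.2⟩))
        rwa [rowPerm_rowInv huk, colPerm_colInv hvj] at g)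
    refine (h1.comp (fun r hr => D.row_fwd hi.1 hi.2 hr)
      (fun c hc => D.col_fwd hi.1 hi.2 hc)).congr ?_
    intro r hr c hc
    exact hZk r c (D.mem_kept hi.1 hi.2 hr hc)
  -- the maps
  let f : MvPolynomial L K →+* SB :=
    MvPolynomial.eval₂Hom (algebraMap K SB) (fun p : L => w p.1.1 p.1.2)
  let g : MvPolynomial (↥(ladderHat L a b u v j k) ⊕ ↥(extraVars a b u v j k)) K →+* SA :=
    MvPolynomial.eval₂Hom (algebraMap K SA)
      (Sum.elim (fun q => z (rowInv u (a k) q.1.1) (colInv v (b j) q.1.2))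
        (fun q => z q.1.1 q.1.2))
  have hfX : ∀ p : L, f (MvPolynomial.X p) = w p.1.1 p.1.2 := fun p => by simp [f]
  have hgl : ∀ q, g (MvPolynomial.X (Sum.inl q)) =
    z (rowInv u (a k) q.1.1) (colInv v (b j) q.1.2) := fun p => by simp [g]
  have hgr : ∀ q, g (MvPolynomial.X (Sum.inr q)) = z q.1.1 q.1.2 := fun p => by simp [g]
  have hfC : ∀ y, f (MvPolynomial.C y) = algebraMap K SB y := fun y => by simp [f]
  have hgC : ∀ y, g (MvPolynomial.C y) = algebraMap K SA y := fun y => by simp [g]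
  have hwuv : w u v = Z u v := pivT_row_u _ _ _ _ _ _
  have hzuv : z u v = W u v := pivT_row_u _ _ _ _ _ _
  clear_value f g
  obtain ⟨F, hF⟩ := locQ_lift I (MvPolynomial.X ⟨(u, v), hLuv⟩) f (by
      rw [hI']
      exact genIdeal_le_ker f L _ a b t n s w hfX (fun i hi =>
        D.MVan_bwd hi.1 hi.2 (ht2 i) hZuv (hZM i hi)))
    (by rw [hfX, hwuv]; exact IsUnit.of_mul_eq_one pb hZuv)
  obtain ⟨G, hG⟩ := locQ_lift J (MvPolynomial.X (Sum.inr ⟨(u, v), hEuv⟩)) g (by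
      rw [hJ']
      refine genIdeal_le_ker g _ _ _ _ _ n s
        (fun r c => z (rowInv u (a k) r) (colInv v (b j) c)) hgl (fun i hi => ?_)
      exact (D.MVan_fwd hi.1 hi.2 (hsize i hi).1 hWuv (hWM i hi)).comp
        (fun r hr => D.row_bwd hi.1 hi.2 hr) (fun c hc => D.col_bwd hi.1 hi.2 hc))
    (by rw [hgr, hzuv]; exact IsUnit.of_mul_eq_one pa hWuv)
  change SA →+* SB at F
  change SB →+* SA at G
  change ∀ y, F (α y) = f y at hF
  change ∀ y, G (β y) = g y at hG
  have hFW : ∀ r c, (r, c) ∈ L → F (W r c) = w r c := by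
    intro r c h
    have := hW ⟨(r, c), h⟩
    simp only at this
    rw [this, hF, hfX]
  have hGZ : ∀ r c, (r, c) ∈ L → G (Z r c) = z r c := by
    intro r c h
    rcases D.cover h with h' | h'
    · have := hzh ⟨_, hke r c h'⟩
      simp only at this
      rw [hZk r c h', this, hG, hgl]
      simp only [rowInv_rowPerm huk, colInv_colPerm hvj]
    · have := hZe ⟨(r, c), h'⟩
      simp only at this
      rw [this, hG, hgr]
  have hFp : F pa = pb := by
    have h1 : Z u v * F pa = 1 := by
      rw [← hwuv, ← hFW u v hLuv, ← map_mul, hWuv, map_one]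
    linear_combination pb * h1 - F pa * hZuv
  have hGp : G pb = pa := by
    have h1 : W u v * G pb = 1 := by
      rw [← hzuv, ← hGZ u v hLuv, ← map_mul, hZuv, map_one]
    linear_combination pa * h1 - G pb * hWuv
  have hGw : ∀ r c, (r, c) ∈ L → G (w r c) = W r c := by
    intro r c h
    rw [map_pivT G P u v Z z pb L hGZ D.pivP_sub r c h, hGp]
    exact pivT_pivT _ _ _ _ _ _ (neg_add_cancel pa) _ _
  have hFz : ∀ r c, (r, c) ∈ L → F (z r c) = Z r c := by
    intro r c h
    rw [map_pivT F P u v W w (-pa) L hFW D.pivP_sub r c h, RingHom.map_neg F pa, hFp]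
    exact pivT_pivT _ _ _ _ _ _ (add_neg_cancel pb) _ _
  have hαC : ∀ y, α (MvPolynomial.C y) = algebraMap K SA y := fun y => locQ_alg I _ y
  have hβC : ∀ y, β (MvPolynomial.C y) = algebraMap K SB y := fun y => locQ_alg J _ y
  have hGF' : (G.comp (F.comp α)) = α := by
    apply MvPolynomial.ringHom_ext
    · intro y
      simp only [RingHom.comp_apply]
      rw [hF, hfC, ← hβC, hG, hgC, hαC]
    · intro p
      simp only [RingHom.comp_apply]
      rw [hF, hfX, hGw _ _ p.2, hW]
  have hFG' : (F.comp (G.comp β)) = β := by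
    apply MvPolynomial.ringHom_ext
    · intro y
      simp only [RingHom.comp_apply]
      rw [hG, hgC, ← hαC, hF, hfC, hβC]
    · rintro (⟨q, hq⟩ | q)
      · simp only [RingHom.comp_apply]
        obtain ⟨⟨r, c⟩, hrc, rfl⟩ := hq
        have := hzh ⟨_, hke r c hrc⟩
        simp only at this
        rw [hG, hgl]
        simp only [rowInv_rowPerm huk, colInv_colPerm hvj]
        rw [hFz _ _ hrc.1, hZk _ _ hrc]
        exact this
      · simp only [RingHom.comp_apply]
        rw [hG, hgr, hFz _ _ (D.extra_sub q.2), hZe]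
  have hGF : G.comp F = RingHom.id SA :=
    locQ_ext I _ _ _ (fun y => DFunLike.congr_fun hGF' y)
  have hFG : F.comp G = RingHom.id SB :=
    locQ_ext J _ _ _ (fun y => DFunLike.congr_fun hFG' y)
  exact ⟨AlgEquiv.ofRingEquiv (f := RingEquiv.ofRingHom F G hFG hGF) (fun y => by
    change F (algebraMap K SA y) = algebraMap K SB y
    rw [← hαC, hF, hfC])⟩
end

section
/- Let X be an m×n matrix of indeterminates, L a one-sided ladder with distinguished points (a_1,b_1),...,(a_s,b_s) and sizes t = (t_1,...,t_s) satisfying t_k ≤ min{a_k, m-b_k+1} and b_{k-1}-b_k < t_k - t_{k-1} < a_k - a_{k-1}. Let L̃ be the one-sided ladder with lower outside corners (a_1 - t_1 + 1, b_1 + t_1 - 1),...,(a_s - t_s + 1, b_s + t_s - 1). Then the height of the mixed ladder determinantal ideal I_t(L) in K[L] equals the cardinality |L̃|. -/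
open MvPolynomial

variable {K : Type*} [Field K]

/-- The height of an ideal. -/
noncomputable def idealHeight {R : Type*} [CommRing R] (I : Ideal R) : ℕ∞ :=
  ⨅ (p : PrimeSpectrum R) (_ : I ≤ p.asIdeal), Order.height p

/-- partial evaluation: variables in `T` go to constants, others stay. -/
noncomputable def mliPsi {K F σ : Type*} [Field K] [Field F] [Algebra K F] [DecidableEq σ]
    (φ : σ → F) (T : Finset σ) : MvPolynomial σ K →ₐ[K] MvPolynomial σ F :=
  aeval (fun e => if e ∈ T then C (φ e) else X e)

lemma mli_lift {K F σ : Type*} [Field K] [Field F] [Algebra K F] [DecidableEq σ]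
    (φ : σ → F) (T : Finset σ) (r : F) (hr : r ∈ Algebra.adjoin K (φ '' (T : Set σ))) :
    ∃ p : MvPolynomial σ K, ∀ T' : Finset σ, T ⊆ T' → mliPsi φ T' p = C r := by
  induction hr using Algebra.adjoin_induction with
  | mem x hx =>
    obtain ⟨e, he, rfl⟩ := hx
    refine ⟨X e, fun T' hT => ?_⟩
    simp [mliPsi, hT he]
  | algebraMap k =>
    refine ⟨C k, fun T' hT => ?_⟩
    simp only [mliPsi, aeval_C]
    rfl
  | add x y _ _ hx hy =>
    obtain ⟨p, hp⟩ := hx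
    obtain ⟨q, hq⟩ := hy
    exact ⟨p + q, fun T' hT => by rw [map_add, hp T' hT, hq T' hT, map_add]⟩
  | mul x y _ _ hx hy =>
    obtain ⟨p, hp⟩ := hx
    obtain ⟨q, hq⟩ := hy
    exact ⟨p * q, fun T' hT => by rw [map_mul, hp T' hT, hq T' hT, map_mul]⟩

lemma mli_psi_mono {K F σ : Type*} [Field K] [Field F] [Algebra K F] [DecidableEq σ]
    (φ : σ → F) {T T' : Finset σ} (h : T ⊆ T') :
    RingHom.ker (mliPsi (K := K) φ T) ≤ RingHom.ker (mliPsi (K := K) φ T') := by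
  have key : mliPsi (K := K) φ T' =
      ((aeval (fun e => if e ∈ T' then C (φ e) else X e) :
        MvPolynomial σ F →ₐ[F] MvPolynomial σ F).restrictScalars K).comp (mliPsi φ T) := by
    apply MvPolynomial.algHom_ext
    intro e
    simp only [mliPsi, AlgHom.comp_apply, aeval_X, AlgHom.restrictScalars_apply]
    by_cases he : e ∈ T
    · simp [he, h he]
    · simp [he]
  intro p hp
  rw [RingHom.mem_ker] at hp ⊢
  rw [key, AlgHom.comp_apply, hp, map_zero]

theorem mli_height_lower {K F σ : Type*} [Field K] [Field F] [Algebra K F] [Fintype σ]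
    [DecidableEq σ] (φ : σ → F) (P : Ideal (MvPolynomial σ K))
    (hker : ∀ p, aeval φ p = 0 → p ∈ P) (D : Finset σ) (ρ : σ → ℕ)
    (hdet : ∀ d ∈ D, φ d ∈ IntermediateField.adjoin K (φ '' {e | ρ e < ρ d})) :
    (D.card : ℕ∞) ≤ P.height := by
  have main : ∀ T : Finset σ, (∀ x ∈ T, ∀ e, ρ e < ρ x → e ∈ T) →
      (((D ∩ T).card : ℕ) : ℕ∞) ≤ (RingHom.ker (mliPsi (K := K) φ T)).height := by
    intro T
    induction T using Finset.induction_on_max_value ρ with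
    | empty => simp
    | insert a s has hmax ih =>
      intro hdown
      have hds : ∀ x ∈ s, ∀ e, ρ e < ρ x → e ∈ s := by
        intro x hx e he
        have := hdown x (Finset.mem_insert_of_mem hx) e he
        rcases Finset.mem_insert.1 this with rfl | h
        · exact absurd (hmax x hx) (not_le.2 he)
        · exact h
      have ih' := ih hds
      have hle : RingHom.ker (mliPsi (K := K) φ s) ≤
        RingHom.ker (mliPsi (K := K) φ (insert a s)) := mli_psi_mono φ (Finset.subset_insert a s)
      by_cases haD : a ∈ D
      · have hea : ∀ e, ρ e < ρ a → e ∈ s := by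
          intro e he
          have := hdown a (Finset.mem_insert_self a s) e he
          rcases Finset.mem_insert.1 this with rfl | h
          · exact absurd he (lt_irrefl _)
          · exact h
        have h1 : φ a ∈ IntermediateField.adjoin K (φ '' (s : Set σ)) :=
          IntermediateField.adjoin.mono K _ _ (Set.image_mono (fun e he => hea e he)) (hdet a haD)
        rw [IntermediateField.mem_adjoin_iff_div] at h1
        obtain ⟨r, hr, t, ht, hrt⟩ := h1
        have h2 : ∃ r ∈ Algebra.adjoin K (φ '' (s : Set σ)), ∃ t ∈ Algebra.adjoin K (φ '' (s : Set σ)),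
            t ≠ 0 ∧ φ a * t = r := by
          by_cases h0 : t = 0
          · exact ⟨0, zero_mem _, 1, one_mem _, one_ne_zero, by rw [hrt, h0]; simp⟩
          · exact ⟨r, hr, t, ht, h0, by rw [hrt]; field_simp⟩
        obtain ⟨r, hr, t, ht, ht0, hrt⟩ := h2
        obtain ⟨f, hf⟩ := mli_lift φ s r hr
        obtain ⟨g, hg⟩ := mli_lift φ s t ht
        have hlt : RingHom.ker (mliPsi (K := K) φ s) <
            RingHom.ker (mliPsi (K := K) φ (insert a s)) := by
          refine lt_of_le_of_ne hle fun heq => ?_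
          have m1 : X a * g - f ∈ RingHom.ker (mliPsi (K := K) φ (insert a s)) := by
            rw [RingHom.mem_ker, map_sub, map_mul, hf _ (Finset.subset_insert a s),
              hg _ (Finset.subset_insert a s), ← hrt]
            simp [mliPsi]
          rw [← heq, RingHom.mem_ker, map_sub, map_mul, hf _ subset_rfl, hg _ subset_rfl] at m1
          have m2 : mliPsi (K := K) φ s (X a) = X a := by simp [mliPsi, has]
          rw [m2] at m1
          have m3 := congrArg (coeff (Finsupp.single a 1)) m1
          rw [coeff_sub, mul_comm, coeff_C_mul, coeff_X, coeff_C] at m3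
          have : (0 : σ →₀ ℕ) ≠ Finsupp.single a 1 := by
            intro h
            have := DFunLike.congr_fun h a
            simp at this
          simp [this] at m3
          exact ht0 m3
        have p1 : (RingHom.ker (mliPsi (K := K) φ s)).IsPrime := RingHom.ker_isPrime _
        have p2 : (RingHom.ker (mliPsi (K := K) φ (insert a s))).IsPrime := RingHom.ker_isPrime _
        refine le_trans ?_ (Ideal.height_add_one_le_of_lt_of_isPrime hlt)
        rw [Finset.inter_insert_of_mem haD, Finset.card_insert_of_notMem (by simp [has])]
        push_cast
        gcongr
      · rw [Finset.inter_insert_of_notMem haD]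
        exact ih'.trans (Ideal.height_mono hle)
  have := main Finset.univ (by simp)
  rw [Finset.inter_univ] at this
  refine this.trans (Ideal.height_mono ?_)
  intro p hp
  apply hker
  rw [RingHom.mem_ker] at hp
  have : mliPsi (K := K) φ Finset.univ p = C (aeval φ p) := by
    have : mliPsi (K := K) φ Finset.univ =
        ((Algebra.ofId F (MvPolynomial σ F)).restrictScalars K).comp (aeval φ) := by
      apply MvPolynomial.algHom_ext
      intro e
      simp [mliPsi, Algebra.ofId_apply]
    rw [this]; rfl
  rw [this] at hp
  exact C_injective _ _ (by rw [hp, C_0])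

lemma mli_det_mem {K F : Type*} [Field K] [Field F] [Algebra K F] (E : IntermediateField K F)
    (M : ℕ → ℕ → F) (U V : Finset ℕ) (x y : ℕ)
    (hA : ∀ u ∈ U, ∀ v ∈ V, M u v ∈ E) (hc : ∀ v ∈ V, M x v ∈ E) (hb : ∀ u ∈ U, M u y ∈ E)
    (hrow : ∃ l : ℕ → F, ∀ v ∈ insert y V, M x v = ∑ u ∈ U, l u * M u v)
    (hcol : ∃ k : ℕ → F, ∀ u ∈ U, M u y = ∑ v ∈ V, k v * M u v) : M x y ∈ E := by
  obtain ⟨l, hl⟩ := hrow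
  obtain ⟨k, hk⟩ := hcol
  obtain ⟨π, hπ⟩ := LinearMap.exists_leftInverse_of_injective
    (Algebra.linearMap E F) (LinearMap.ker_eq_bot.2 (algebraMap E F).injective)
  have hπ' : ∀ e : E, π (e : F) = e := fun e => LinearMap.congr_fun hπ e
  have h1 : ∀ v ∈ V, M x v = ∑ u ∈ U, (π (l u) : F) * M u v := by
    intro v hv
    have e1 : π (M x v) = ∑ u ∈ U, π (l u * M u v) := by
      rw [hl v (Finset.mem_insert_of_mem hv), map_sum]
    have e2 : π (M x v) = (⟨M x v, hc v hv⟩ : E) := hπ' ⟨M x v, hc v hv⟩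
    have e3 : M x v = ((π (M x v) : E) : F) := by rw [e2]
    rw [e3, e1]
    push_cast
    refine Finset.sum_congr rfl fun u hu => ?_
    have : l u * M u v = (⟨M u v, hA u hu v hv⟩ : E) • l u := by
      rw [mul_comm]; rfl
    rw [this, map_smul]
    simp [mul_comm]
  have h2 : M x y = ∑ u ∈ U, (π (l u) : F) * M u y := by
    calc M x y = ∑ u ∈ U, l u * M u y := hl y (Finset.mem_insert_self _ _)
      _ = ∑ u ∈ U, l u * ∑ v ∈ V, k v * M u v :=
        Finset.sum_congr rfl fun u hu => by rw [hk u hu]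
      _ = ∑ v ∈ V, k v * ∑ u ∈ U, l u * M u v := by
        simp_rw [Finset.mul_sum]
        rw [Finset.sum_comm]
        refine Finset.sum_congr rfl fun v _ => Finset.sum_congr rfl fun u _ => by ring
      _ = ∑ v ∈ V, k v * ∑ u ∈ U, (π (l u) : F) * M u v :=
        Finset.sum_congr rfl fun v hv => by rw [← h1 v hv, ← hl v (Finset.mem_insert_of_mem hv)]
      _ = ∑ u ∈ U, (π (l u) : F) * ∑ v ∈ V, k v * M u v := by
        simp_rw [Finset.mul_sum]
        rw [Finset.sum_comm]
        refine Finset.sum_congr rfl fun v _ => Finset.sum_congr rfl fun u _ => by ring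
      _ = ∑ u ∈ U, (π (l u) : F) * M u y :=
        Finset.sum_congr rfl fun u hu => by rw [hk u hu]
  rw [h2]
  exact sum_mem fun u hu => mul_mem (π (l u)).2 (hb u hu)

lemma mli_indep {F : Type*} [Field F] (M : ℕ → ℕ → F) (S V : Finset ℕ) (prev : ℕ → Finset ℕ)
    (g : ℕ → ℕ) (hg : ∀ x ∈ S, ∀ u ∈ S, u ≠ x → g u ≤ g x → u ∈ prev x)
    (h : ∀ x ∈ S, ¬ ∃ l : ℕ → F, ∀ v ∈ V, M x v = ∑ u ∈ prev x, l u * M u v) :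
    LinearIndependent F (fun x : S => fun v : V => M x v) := by
  classical
  rw [Fintype.linearIndependent_iff]
  intro c hc
  by_contra! hne
  obtain ⟨i0, hi0⟩ := hne
  obtain ⟨x, hx, hmax⟩ := Finset.exists_max_image (Finset.univ.filter fun i : S => c i ≠ 0)
    (fun i => g i) ⟨i0, by simpa using hi0⟩
  have hx0 : c x ≠ 0 := by simpa using hx
  let c' : ℕ → F := fun u => if hu : u ∈ S then c ⟨u, hu⟩ else 0
  have hsum : ∀ v ∈ V, ∑ u ∈ S, c' u * M u v = 0 := by
    intro v hv
    have := congrFun hc ⟨v, hv⟩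
    simp only [Finset.sum_apply, Pi.smul_apply, smul_eq_mul, Pi.zero_apply] at this
    rw [← this, ← Finset.sum_coe_sort S]
    refine Finset.sum_congr rfl fun u _ => ?_
    simp [c']
  refine h x x.2 ⟨fun u => if u = x then 0 else - c' u / c x, fun v hv => ?_⟩
  have hs := hsum v hv
  rw [← Finset.add_sum_erase S _ x.2] at hs
  have hcx : c' x = c x := by simp [c']
  rw [hcx] at hs
  have h3 : ∑ u ∈ prev x, (if u = x then 0 else - c' u / c x) * M u v =
      ∑ u ∈ S.erase x, (- c' u / c x) * M u v := by
    have e1 : ∑ u ∈ S.erase x, (- c' u / c x) * M u v =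
        ∑ u ∈ (S.erase x).filter (fun u => u ∈ prev x), (- c' u / c x) * M u v := by
      symm
      apply Finset.sum_filter_of_ne
      intro u hu hne
      by_contra hnp
      have huS := Finset.mem_of_mem_erase hu
      apply hne
      have : c' u = 0 := by
        by_contra hcu
        have hcu' : c ⟨u, huS⟩ ≠ 0 := by simpa [c', huS] using hcu
        have := hmax ⟨u, huS⟩ (by simpa using hcu')
        exact hnp (hg x x.2 u huS (Finset.ne_of_mem_erase hu) this)
      simp [this]
    rw [e1]
    symm
    have e2 : ∀ u ∈ (S.erase (x : ℕ)).filter (fun u => u ∈ prev x), (- c' u / c x) * M u v =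
      (if u = x then 0 else - c' u / c x) * M u v := by
      intro u hu
      have : u ≠ x := Finset.ne_of_mem_erase (Finset.mem_filter.1 hu).1
      simp [this]
    rw [Finset.sum_congr rfl e2]
    apply Finset.sum_subset
    · intro u hu
      exact (Finset.mem_filter.1 hu).2
    · intro u hu hu2
      by_cases hux : u = x
      · simp [hux]
      · have : u ∉ S := by
          intro hS
          exact hu2 (by simp [hux, hS, hu])
        simp [c', this]
  rw [h3]
  have : c x * M x v = - ∑ u ∈ S.erase x, c' u * M u v := by linear_combination hs
  have h4 : ∑ u ∈ S.erase (x : ℕ), (- c' u / c x) * M u v =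
      (- ∑ u ∈ S.erase (x : ℕ), c' u * M u v) / c x := by
    rw [← Finset.sum_neg_distrib, Finset.sum_div]
    exact Finset.sum_congr rfl fun u _ => by ring
  rw [h4, ← this]
  field_simp

lemma mli_exists_minor {F : Type*} [Field F] (M : ℕ → ℕ → F) (S V : Finset ℕ) (t : ℕ)
    (hli : LinearIndependent F (fun x : S => fun v : V => M x v)) (ht : t ≤ S.card) :
    ∃ r c : Fin t → ℕ, StrictMono r ∧ StrictMono c ∧ (∀ i, r i ∈ S) ∧ (∀ j, c j ∈ V) ∧
      Matrix.det (Matrix.of fun i j => M (r i) (c j)) ≠ 0 := by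
  obtain ⟨S', hS', hcard⟩ := Finset.exists_subset_card_eq ht
  have hli' : LinearIndependent F (fun x : S' => fun v : V => M x v) :=
    hli.comp (fun x : S' => (⟨x, hS' x.2⟩ : S)) (by
      intro x y hxy
      exact Subtype.ext (congrArg (fun z : S => (z : ℕ)) hxy))
  let N : Matrix S' V F := Matrix.of fun x v => M x v
  have hrk : N.rank = t := by
    have := LinearIndependent.rank_matrix (M := N) hli'
    simpa [hcard] using this
  obtain ⟨κ, a, ha, hspan, hind⟩ := exists_linearIndependent' F (fun v : V => fun x : S' => M x v)
  have : Finite κ := Finite.of_injective a ha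
  have := Fintype.ofFinite κ
  have hκ : Fintype.card κ = t := by
    rw [← finrank_span_eq_card hind, hspan, ← hrk, Matrix.rank_eq_finrank_span_cols]
    rfl
  let V' : Finset ℕ := Finset.univ.image (fun k : κ => (a k : ℕ))
  have hV' : V'.card = t := by
    have hinj : Function.Injective (fun k : κ => (a k : ℕ)) := Subtype.val_injective.comp ha
    rw [Finset.card_image_of_injective _ hinj, Finset.card_univ, hκ]
  refine ⟨S'.orderEmbOfFin hcard, V'.orderEmbOfFin hV', OrderEmbedding.strictMono _,
    OrderEmbedding.strictMono _, fun i => hS' (Finset.orderEmbOfFin_mem _ _ _), fun j => ?_, ?_⟩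
  · have := Finset.orderEmbOfFin_mem V' hV' j
    obtain ⟨k, -, hk⟩ := Finset.mem_image.1 this
    rw [← hk]; exact (a k).2
  · have hk : ∀ j, ∃ k : κ, (a k : ℕ) = V'.orderEmbOfFin hV' j := by
      intro j
      obtain ⟨k, -, hk⟩ := Finset.mem_image.1 (Finset.orderEmbOfFin_mem V' hV' j)
      exact ⟨k, hk⟩
    choose k hk using hk
    have hkinj : Function.Injective k := by
      intro i j hij
      apply (V'.orderEmbOfFin hV').injective
      rw [← hk, ← hk, hij]
    have h1 := hind.comp k hkinj
    let e : Fin t ≃ S' := (S'.orderIsoOfFin hcard).toEquiv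
    have h2 := h1.map' (LinearEquiv.funCongrLeft F F e).toLinearMap (LinearEquiv.ker _)
    have h3 : LinearIndependent F (Matrix.of fun i j => M (S'.orderEmbOfFin hcard i) (V'.orderEmbOfFin hV' j)).col := by
      have heq : (Matrix.of fun i j => M (S'.orderEmbOfFin hcard i) (V'.orderEmbOfFin hV' j)).col =
          (LinearEquiv.funCongrLeft F F e).toLinearMap ∘
            ((fun (v : V) (x : S') => M x v) ∘ a) ∘ k := by
        ext j i
        simp [LinearMap.funLeft, e, hk]
      rw [heq]
      exact h2
    rw [Matrix.linearIndependent_cols_iff_isUnit, Matrix.isUnit_iff_isUnit_det] at h3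
    exact h3.ne_zero

lemma mli_card_union (R C : ℕ → Finset ℕ) (s : ℕ) (hs : 1 ≤ s)
    (hR : ∀ i, 1 ≤ i → i < s → R i ⊆ R (i + 1)) (hC : ∀ i, 1 ≤ i → i < s → C (i + 1) ⊆ C i) :
    ((((Finset.Icc 1 s).biUnion fun i => R i ×ˢ C i).card : ℕ) : ℤ) =
      (R 1).card * (C 1).card +
        ∑ i ∈ Finset.Ico 1 s, (((R (i + 1)).card : ℤ) - (R i).card) * (C (i + 1)).card := by
  induction s, hs using Nat.le_induction with
  | base => simp
  | succ s hs ih =>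
    have ih' := ih (fun i h1 h2 => hR i h1 (by omega)) (fun i h1 h2 => hC i h1 (by omega))
    rw [Finset.sum_Ico_succ_top hs, ← add_assoc, ← ih']
    have hU : (Finset.Icc 1 (s + 1)).biUnion (fun i => R i ×ˢ C i) =
        (Finset.Icc 1 s).biUnion (fun i => R i ×ˢ C i) ∪
          (R (s + 1) \ R s) ×ˢ C (s + 1) := by
      ext ⟨x, y⟩
      simp only [Finset.mem_biUnion, Finset.mem_Icc, Finset.mem_union, Finset.mem_product,
        Finset.mem_sdiff]
      constructor
      · rintro ⟨i, ⟨h1, h2⟩, hx, hy⟩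
        by_cases his : i ≤ s
        · exact Or.inl ⟨i, ⟨h1, his⟩, hx, hy⟩
        · obtain rfl : i = s + 1 := by omega
          by_cases hxs : x ∈ R s
          · exact Or.inl ⟨s, ⟨hs, le_rfl⟩, hxs, hC s hs (by omega) hy⟩
          · exact Or.inr ⟨⟨hx, hxs⟩, hy⟩
      · rintro (⟨i, ⟨h1, h2⟩, hx, hy⟩ | ⟨⟨hx, _⟩, hy⟩)
        · exact ⟨i, ⟨h1, by omega⟩, hx, hy⟩
        · exact ⟨s + 1, ⟨by omega, le_rfl⟩, hx, hy⟩
    have hmono : ∀ i, 1 ≤ i → i ≤ s → R i ⊆ R s := by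
      intro i h1 h2
      induction s, h2 using Nat.le_induction with
      | base => exact subset_rfl
      | succ k hk ihk =>
        by_cases hk' : k + 1 = i
        · rw [hk']
        · refine (Finset.Subset.trans ?_ (hR k (by omega) (by omega)))
          clear ih ih' hU
          have : ∀ j, i ≤ j → j ≤ k → R i ⊆ R j := by
            intro j hj
            induction j, hj using Nat.le_induction with
            | base => intro _; exact subset_rfl
            | succ q hq ihq =>
              intro hqk
              exact (ihq (by omega)).trans (hR q (by omega) (by omega))
          exact this k hk le_rfl
    have hdisj : Disjoint ((Finset.Icc 1 s).biUnion (fun i => R i ×ˢ C i))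
          ((R (s + 1) \ R s) ×ˢ C (s + 1)) := by
      rw [Finset.disjoint_left]
      rintro ⟨x, y⟩ h1 h2
      simp only [Finset.mem_biUnion, Finset.mem_Icc, Finset.mem_product,
        Finset.mem_sdiff] at h1 h2
      obtain ⟨i, ⟨hi1, hi2⟩, hx, hy⟩ := h1
      exact h2.1.2 (hmono i hi1 hi2 hx)
    rw [hU, Finset.card_union_of_disjoint hdisj, Finset.card_product,
      Finset.card_sdiff_of_subset (hR s hs (by omega))]
    have := Finset.card_le_card (hR s hs (by omega))
    push_cast [Nat.cast_sub this]
    ring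

lemma mli_abel (r c : ℕ → ℤ) (s : ℕ) (hs : 1 ≤ s) :
    r 1 * c 1 + ∑ i ∈ Finset.Ico 1 s, (r (i + 1) - r i) * c (i + 1) =
      r s * c s + ∑ i ∈ Finset.Ico 1 s, r i * (c i - c (i + 1)) := by
  induction s, hs using Nat.le_induction with
  | base => simp
  | succ s hs ih =>
    rw [Finset.sum_Ico_succ_top hs, Finset.sum_Ico_succ_top hs, ← add_assoc, ih]
    ring

lemma mli_card_compare (R C R' C' : ℕ → Finset ℕ) (s : ℕ) (hs : 1 ≤ s)
    (hR : ∀ i, 1 ≤ i → i < s → R i ⊆ R (i + 1)) (hC : ∀ i, 1 ≤ i → i < s → C (i + 1) ⊆ C i)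
    (hR' : ∀ i, 1 ≤ i → i < s → R' i ⊆ R' (i + 1))
    (hC' : ∀ i, 1 ≤ i → i < s → C' (i + 1) ⊆ C' i)
    (h1 : ∀ i, 1 ≤ i → i ≤ s → (R i).card ≤ (R' i).card)
    (h2 : ∀ i, 1 ≤ i → i ≤ s → (C i).card ≤ (C' i).card) :
    ((Finset.Icc 1 s).biUnion fun i => R i ×ˢ C i).card ≤
      ((Finset.Icc 1 s).biUnion fun i => R' i ×ˢ C' i).card := by
  have e1 := mli_card_union R C s hs hR hC
  have e2 := mli_card_union R' C' s hs hR' hC'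
  zify
  rw [e2]
  have a1 := mli_abel (fun i => ((R i).card : ℤ)) (fun i => ((C i).card : ℤ)) s hs
  have a2 := mli_abel (fun i => ((R' i).card : ℤ)) (fun i => ((C i).card : ℤ)) s hs
  rw [e1, a1]
  calc ((R s).card : ℤ) * (C s).card + ∑ i ∈ Finset.Ico 1 s,
        ((R i).card : ℤ) * ((C i).card - (C (i + 1)).card)
      ≤ ((R' s).card : ℤ) * (C s).card + ∑ i ∈ Finset.Ico 1 s,
        ((R' i).card : ℤ) * ((C i).card - (C (i + 1)).card) := by
        apply add_le_add
        · have := h1 s hs le_rfl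
          gcongr
        · apply Finset.sum_le_sum
          intro i hi
          rw [Finset.mem_Ico] at hi
          have k1 := h1 i hi.1 hi.2.le
          have k2 := Finset.card_le_card (hC i hi.1 hi.2)
          apply mul_le_mul_of_nonneg_right <;> omega
    _ = _ := a2.symm
    _ ≤ _ := by
        apply add_le_add
        · have := h2 1 le_rfl hs
          gcongr
        · apply Finset.sum_le_sum
          intro i hi
          rw [Finset.mem_Ico] at hi
          have k1 := h2 (i + 1) (by omega) (by omega)
          have k2 := Finset.card_le_card (hR' i hi.1 hi.2)
          apply mul_le_mul_of_nonneg_left <;> omega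

open Classical in
/-- the (partial) matrix of images of the variables, extended by zero. -/
noncomputable def mliM {K F : Type*} [Field K] [Field F] [Algebra K F] {L : Set (ℕ × ℕ)}
    (f : MvPolynomial L K →ₐ[K] F) (u v : ℕ) : F :=
  if h : (u, v) ∈ L then f (X ⟨(u, v), h⟩) else 0

lemma mliM_mem {K F : Type*} [Field K] [Field F] [Algebra K F] {L : Set (ℕ × ℕ)}
    (f : MvPolynomial L K →ₐ[K] F) (u v : ℕ) (h : (u, v) ∈ L) :
    mliM f u v = f (X ⟨(u, v), h⟩) := by
  simp [mliM, h]

lemma mli_region_sub {L : Set (ℕ × ℕ)} {a b : ℕ → ℕ} {n s : ℕ}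
    (hdecomp : L = ⋃ i ∈ Set.Icc 1 s, ladderRegion a b n i) {i : ℕ} (hi : i ∈ Set.Icc 1 s)
    {p : ℕ × ℕ} (hp : p ∈ ladderRegion a b n i) : p ∈ L := by
  rw [hdecomp]
  exact Set.mem_biUnion hi hp

lemma mli_minor_zero {K F : Type*} [Field K] [Field F] [Algebra K F] {L : Set (ℕ × ℕ)}
    {a b t : ℕ → ℕ} {n s : ℕ}
    (hdecomp : L = ⋃ i ∈ Set.Icc 1 s, ladderRegion a b n i)
    (f : MvPolynomial L K →ₐ[K] F) (hf : ∀ p ∈ mixedLadderIdeal K L a b t n s, f p = 0)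
    (i : ℕ) (hi : i ∈ Set.Icc 1 s) (r c : Fin (t i) → ℕ) (hr : StrictMono r) (hc : StrictMono c)
    (hr' : ∀ x, r x ∈ Finset.Icc 1 (a i)) (hc' : ∀ y, c y ∈ Finset.Icc (b i) n) :
    Matrix.det (Matrix.of fun x y => mliM f (r x) (c y)) = 0 := by
  have hreg : ∀ x y, (r x, c y) ∈ ladderRegion a b n i := by
    intro x y
    have h1 := Finset.mem_Icc.1 (hr' x)
    have h2 := Finset.mem_Icc.1 (hc' y)
    exact ⟨h1.1, h1.2, h2.1, h2.2⟩
  have hL : ∀ x y, (r x, c y) ∈ L := fun x y => mli_region_sub hdecomp hi (hreg x y)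
  have hmem : Matrix.det (Matrix.of fun x y => (MvPolynomial.X ⟨(r x, c y), hL x y⟩ :
        MvPolynomial L K)) ∈ mixedLadderIdeal K L a b t n s := by
    unfold mixedLadderIdeal
    refine Ideal.mem_iSup_of_mem i (Ideal.mem_iSup_of_mem hi (Ideal.subset_span ?_))
    exact ⟨r, c, hr, hc, fun x y => ⟨hreg x y, hL x y⟩, rfl⟩
  have h := hf _ hmem
  rw [AlgHom.map_det] at h
  rw [← h]
  congr 1
  ext x y
  simp [mliM_mem f _ _ (hL x y)]

lemma mli_mono_chain (R : ℕ → ℕ) (s : ℕ) (h : ∀ i, 1 ≤ i → i < s → R i ≤ R (i + 1)) :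
    ∀ i j, 1 ≤ i → i ≤ j → j ≤ s → R i ≤ R j := by
  intro i j hi hij
  induction j, hij using Nat.le_induction with
  | base => intro _; exact le_rfl
  | succ k hk ih =>
    intro hks
    exact (ih (by omega)).trans (h k (by omega) (by omega))

open Classical in
theorem mli_lower {K F : Type*} [Field K] [Field F] [Algebra K F] {L : Set (ℕ × ℕ)}
    (a b t : ℕ → ℕ) (n s : ℕ) (hs : 1 ≤ s) (hLfin : L.Finite)
    (hmono : ∀ i, 1 ≤ i → i < s → a i ≤ a (i + 1) ∧ b i ≤ b (i + 1))
    (hα : ∀ i, 1 ≤ i → i < s → a i - t i + 1 ≤ a (i + 1) - t (i + 1) + 1)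
    (hγ : ∀ i, 1 ≤ i → i < s → b i + t i - 1 ≤ b (i + 1) + t (i + 1) - 1)
    (hdecomp : L = ⋃ i ∈ Set.Icc 1 s, ladderRegion a b n i)
    (hsize : ∀ i ∈ Set.Icc 1 s, 1 ≤ t i ∧ t i ≤ a i ∧ b i + t i ≤ n + 1)
    (f : MvPolynomial L K →ₐ[K] F) (hf : ∀ p ∈ mixedLadderIdeal K L a b t n s, f p = 0)
    (P : Ideal (MvPolynomial L K)) (hP : ∀ p, f p = 0 → p ∈ P) :
    ((((Finset.Icc 1 s).biUnion fun i => Finset.Icc 1 (a i - t i + 1) ×ˢ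
      Finset.Icc (b i + t i - 1) n).card : ℕ) : ℕ∞) ≤ P.height := by
  have : Fintype L := hLfin.fintype
  let M := mliM f
  let R : ℕ → Finset ℕ := fun i => (Finset.Icc 1 (a i)).filter fun x =>
    ∃ l : ℕ → F, ∀ v ∈ Finset.Icc (b i) n, M x v = ∑ u ∈ Finset.Ico 1 x, l u * M u v
  let C : ℕ → Finset ℕ := fun i => (Finset.Icc (b i) n).filter fun y =>
    ∃ k : ℕ → F, ∀ u ∈ Finset.Icc 1 (a i), M u y = ∑ v ∈ Finset.Ioc y n, k v * M u v
  have hRmono : ∀ i, 1 ≤ i → i < s → R i ⊆ R (i + 1) := by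
    intro i h1 h2 x hx
    obtain ⟨hx1, l, hl⟩ := Finset.mem_filter.1 hx
    obtain ⟨ha, hb⟩ := hmono i h1 h2
    rw [Finset.mem_Icc] at hx1
    refine Finset.mem_filter.2 ⟨Finset.mem_Icc.2 ⟨hx1.1, by omega⟩, l, fun v hv => ?_⟩
    rw [Finset.mem_Icc] at hv
    exact hl v (Finset.mem_Icc.2 ⟨by omega, hv.2⟩)
  have hCmono : ∀ i, 1 ≤ i → i < s → C (i + 1) ⊆ C i := by
    intro i h1 h2 x hx
    obtain ⟨hx1, l, hl⟩ := Finset.mem_filter.1 hx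
    obtain ⟨ha, hb⟩ := hmono i h1 h2
    rw [Finset.mem_Icc] at hx1
    refine Finset.mem_filter.2 ⟨Finset.mem_Icc.2 ⟨by omega, by omega⟩, l, fun v hv => ?_⟩
    rw [Finset.mem_Icc] at hv
    exact hl v (Finset.mem_Icc.2 ⟨by omega, by omega⟩)
  have hRcard : ∀ i, 1 ≤ i → i ≤ s → (Finset.Icc 1 (a i - t i + 1)).card ≤ (R i).card := by
    intro i h1 h2
    have hsz := hsize i ⟨h1, h2⟩
    have hsum := Finset.card_filter_add_card_filter_not (s := Finset.Icc 1 (a i)) (fun x =>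
      ∃ l : ℕ → F, ∀ v ∈ Finset.Icc (b i) n, M x v = ∑ u ∈ Finset.Ico 1 x, l u * M u v)
    have hlt : ((Finset.Icc 1 (a i)).filter fun x => ¬
      ∃ l : ℕ → F, ∀ v ∈ Finset.Icc (b i) n, M x v = ∑ u ∈ Finset.Ico 1 x, l u * M u v).card
        < t i := by
      by_contra hge
      rw [not_lt] at hge
      have hli := mli_indep M ((Finset.Icc 1 (a i)).filter fun x => ¬
        ∃ l : ℕ → F, ∀ v ∈ Finset.Icc (b i) n, M x v = ∑ u ∈ Finset.Ico 1 x, l u * M u v)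
        (Finset.Icc (b i) n) (fun x => Finset.Ico 1 x) (fun x => x)
        (by
          intro x hx u hu hne hle
          have := (Finset.mem_Icc.1 (Finset.mem_filter.1 hu).1).1
          exact Finset.mem_Ico.2 ⟨this, by omega⟩)
        (by intro x hx; exact (Finset.mem_filter.1 hx).2)
      obtain ⟨r, c, hr, hc, hr', hc', hdet⟩ := mli_exists_minor M _ _ (t i) hli hge
      exact hdet (mli_minor_zero hdecomp f hf i ⟨h1, h2⟩ r c hr hc
        (fun x => (Finset.mem_filter.1 (hr' x)).1) hc')
    simp only [Nat.card_Icc] at hsum ⊢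
    show _ ≤ (Finset.filter _ _).card
    omega
  have hCcard : ∀ i, 1 ≤ i → i ≤ s → (Finset.Icc (b i + t i - 1) n).card ≤ (C i).card := by
    intro i h1 h2
    have hsz := hsize i ⟨h1, h2⟩
    have hsum := Finset.card_filter_add_card_filter_not (s := Finset.Icc (b i) n) (fun y =>
      ∃ k : ℕ → F, ∀ u ∈ Finset.Icc 1 (a i), M u y = ∑ v ∈ Finset.Ioc y n, k v * M u v)
    have hlt : ((Finset.Icc (b i) n).filter fun y => ¬
      ∃ k : ℕ → F, ∀ u ∈ Finset.Icc 1 (a i), M u y = ∑ v ∈ Finset.Ioc y n, k v * M u v).card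
        < t i := by
      by_contra hge
      rw [not_lt] at hge
      have hli := mli_indep (fun y x => M x y) ((Finset.Icc (b i) n).filter fun y => ¬
        ∃ k : ℕ → F, ∀ u ∈ Finset.Icc 1 (a i), M u y = ∑ v ∈ Finset.Ioc y n, k v * M u v)
        (Finset.Icc 1 (a i)) (fun y => Finset.Ioc y n) (fun y => n - y)
        (by
          intro x hx u hu hne hle
          have := (Finset.mem_Icc.1 (Finset.mem_filter.1 hu).1).2
          have := (Finset.mem_Icc.1 (Finset.mem_filter.1 hx).1).2
          exact Finset.mem_Ioc.2 ⟨by omega, by omega⟩)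
        (by intro x hx; exact (Finset.mem_filter.1 hx).2)
      obtain ⟨r, c, hr, hc, hr', hc', hdet⟩ := mli_exists_minor (fun y x => M x y) _ _ (t i) hli hge
      rw [← Matrix.det_transpose] at hdet
      exact hdet (mli_minor_zero hdecomp f hf i ⟨h1, h2⟩ c r hc hr hc'
        (fun x => (Finset.mem_filter.1 (hr' x)).1))
    simp only [Nat.card_Icc] at hsum ⊢
    show _ ≤ (Finset.filter _ _).card
    omega
  have hcmp := mli_card_compare (fun i => Finset.Icc 1 (a i - t i + 1))
    (fun i => Finset.Icc (b i + t i - 1) n) R C s hs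
    (fun i h1 h2 => Finset.Icc_subset_Icc le_rfl (hα i h1 h2))
    (fun i h1 h2 => Finset.Icc_subset_Icc (hγ i h1 h2) le_rfl) hRmono hCmono hRcard hCcard
  set U := (Finset.Icc 1 s).biUnion fun i => R i ×ˢ C i with hU
  have hUL : ∀ p ∈ U, p ∈ L := by
    rintro ⟨x, y⟩ hp
    simp only [hU, Finset.mem_biUnion, Finset.mem_product] at hp
    obtain ⟨i, hi, hx, hy⟩ := hp
    have hx' := Finset.mem_Icc.1 (Finset.mem_filter.1 hx).1
    have hy' := Finset.mem_Icc.1 (Finset.mem_filter.1 hy).1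
    exact mli_region_sub hdecomp (Finset.mem_Icc.1 hi) ⟨hx'.1, hx'.2, hy'.1, hy'.2⟩
  have hcardD : (U.subtype (fun p => p ∈ L)).card = U.card := by
    rw [Finset.card_subtype, Finset.filter_true_of_mem hUL]
  refine le_trans (Nat.cast_le.2 hcmp) ?_
  rw [← hcardD]
  refine mli_height_lower (fun e => f (X e)) P ?_ (U.subtype (fun p => p ∈ L))
    (fun e => e.1.1 + (n - e.1.2)) ?_
  · intro p hp
    apply hP
    rw [← hp]
    have : f = aeval (fun e => f (X e)) := by
      apply MvPolynomial.algHom_ext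
      simp
    exact DFunLike.congr_fun this p
  · rintro ⟨⟨x, y⟩, hxy⟩ hd
    rw [Finset.mem_subtype] at hd
    simp only [hU, Finset.mem_biUnion, Finset.mem_product] at hd
    obtain ⟨i, hi, hx, hy⟩ := hd
    obtain ⟨hx', l, hl⟩ := Finset.mem_filter.1 hx
    obtain ⟨hy', k, hk⟩ := Finset.mem_filter.1 hy
    rw [Finset.mem_Icc] at hx' hy'
    rw [← mliM_mem f x y hxy]
    have hE : ∀ u v, 1 ≤ u → u ≤ x → y ≤ v → v ≤ n → (u < x ∨ y < v) → M u v ∈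
        IntermediateField.adjoin K ((fun e : L => f (X e)) ''
          {e | e.1.1 + (n - e.1.2) < x + (n - y)}) := by
      intro u v h1 h2 h3 h4 h5
      have huv : (u, v) ∈ L := mli_region_sub hdecomp (Finset.mem_Icc.1 hi)
        ⟨h1, h2.trans hx'.2, hy'.1.trans h3, h4⟩
      apply IntermediateField.subset_adjoin
      refine ⟨⟨(u, v), huv⟩, ?_, (mliM_mem f u v huv).symm⟩
      simp only [Set.mem_ofPred_eq]
      omega
    apply mli_det_mem _ M (Finset.Ico 1 x) (Finset.Ioc y n) x y
    · intro u hu v hv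
      rw [Finset.mem_Ico] at hu
      rw [Finset.mem_Ioc] at hv
      exact hE u v hu.1 hu.2.le hv.1.le hv.2 (Or.inl hu.2)
    · intro v hv
      rw [Finset.mem_Ioc] at hv
      exact hE x v hx'.1 le_rfl hv.1.le hv.2 (Or.inr hv.1)
    · intro u hu
      rw [Finset.mem_Ico] at hu
      exact hE u y hu.1 hu.2.le le_rfl hy'.2 (Or.inl hu.2)
    · refine ⟨l, fun v hv => hl v ?_⟩
      rw [Finset.mem_insert, Finset.mem_Ioc] at hv
      rw [Finset.mem_Icc]
      omega
    · refine ⟨k, fun u hu => hk u ?_⟩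
      rw [Finset.mem_Ico] at hu
      rw [Finset.mem_Icc]
      omega

open Classical in
lemma mli_exists_W (a b t : ℕ → ℕ) (n s : ℕ) (Lf : Finset (ℕ × ℕ)) (hn : ∀ p ∈ Lf, p.2 ≤ n) :
    ∃ W : Finset (ℕ × ℕ), W ⊆ Lf ∧ ∀ p ∈ Lf, (p ∈ W ↔
      ((∀ q ∈ W, q ≠ p → ¬ (q.1 = p.1 ∧ p.2 ≤ q.2)) ∧
      (∀ q ∈ W, q ≠ p → ¬ (q.2 = p.2 ∧ q.1 ≤ p.1)) ∧
      ∀ j ∈ Set.Icc 1 s, p ∈ ladderRegion a b n j →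
        (W.filter (fun q => q.1 < p.1 ∧ p.2 < q.2)).card + 1 < t j)) := by
  let μ : ℕ × ℕ → ℕ := fun p => p.1 + (n - p.2)
  let Φ : ℕ × ℕ → (ℕ × ℕ → Prop) → Prop := fun p S =>
    (∀ q ∈ Lf, S q → q ≠ p → ¬ (q.1 = p.1 ∧ p.2 ≤ q.2)) ∧
    (∀ q ∈ Lf, S q → q ≠ p → ¬ (q.2 = p.2 ∧ q.1 ≤ p.1)) ∧
      ∀ j ∈ Set.Icc 1 s, p ∈ ladderRegion a b n j →
        (Lf.filter (fun q => S q ∧ q.1 < p.1 ∧ p.2 < q.2)).card + 1 < t j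
  have wf : WellFounded (fun p q : ℕ × ℕ => μ p < μ q) := (measure μ).wf
  let piv : ℕ × ℕ → Prop := wf.fix (C := fun _ => Prop)
    (fun p ih => Φ p (fun q => ∃ h : μ q < μ p, ih q h))
  have hpiv : ∀ p, piv p = Φ p (fun q => ∃ _ : μ q < μ p, piv q) := by
    intro p
    exact wf.fix_eq _ p
  refine ⟨Lf.filter piv, Finset.filter_subset _ _, fun p hp => ?_⟩
  rw [Finset.mem_filter, hpiv]
  simp only [hp, true_and]
  have hpn := hn p hp
  refine and_congr ?_ (and_congr ?_ ?_)
  · constructor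
    · intro h q hq hne hh
      rw [Finset.mem_filter] at hq
      refine h q hq.1 ⟨?_, hq.2⟩ hne hh
      have : q.2 ≠ p.2 := fun h2 => hne (Prod.ext hh.1 h2)
      have := hn q hq.1
      simp only [μ]; omega
    · rintro h q hq ⟨_, hq2⟩ hne
      exact h q (Finset.mem_filter.2 ⟨hq, hq2⟩) hne
  · constructor
    · intro h q hq hne hh
      rw [Finset.mem_filter] at hq
      refine h q hq.1 ⟨?_, hq.2⟩ hne hh
      have : q.1 ≠ p.1 := fun h2 => hne (Prod.ext h2 hh.1)
      have := hn q hq.1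
      simp only [μ]; omega
    · rintro h q hq ⟨_, hq2⟩ hne
      exact h q (Finset.mem_filter.2 ⟨hq, hq2⟩) hne
  · have : Lf.filter (fun q => (∃ _ : μ q < μ p, piv q) ∧ q.1 < p.1 ∧ p.2 < q.2) =
        (Lf.filter piv).filter (fun q => q.1 < p.1 ∧ p.2 < q.2) := by
      ext q
      simp only [Finset.mem_filter]
      constructor
      · rintro ⟨h1, ⟨_, h2⟩, h3⟩
        exact ⟨⟨h1, h2⟩, h3⟩
      · rintro ⟨⟨h1, h2⟩, h3⟩
        refine ⟨h1, ⟨?_, h2⟩, h3⟩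
        have := hn q h1
        simp only [μ]; omega
    have hc := congrArg Finset.card this
    constructor
    · intro h j hj hp1
      have h1 := h j hj hp1
      rw [← hc]
      convert h1 using 4
    · intro h j hj hp1
      have h1 := h j hj hp1
      rw [← hc] at h1
      convert h1 using 4

theorem mli_greedy (a b t : ℕ → ℕ) (n s : ℕ) (Lf : Finset (ℕ × ℕ))
    (hL : ∀ p, p ∈ Lf ↔ ∃ i ∈ Set.Icc 1 s, p ∈ ladderRegion a b n i)
    (ha : ∀ i j, 1 ≤ i → i ≤ j → j ≤ s → a i ≤ a j)
    (hb : ∀ i j, 1 ≤ i → i ≤ j → j ≤ s → b i ≤ b j)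
    (hα : ∀ i j, 1 ≤ i → i ≤ j → j ≤ s → a i + t j ≤ a j + t i)
    (hγ : ∀ i j, 1 ≤ i → i ≤ j → j ≤ s → b i + t i ≤ b j + t j)
    (hsize : ∀ i ∈ Set.Icc 1 s, 1 ≤ t i ∧ t i ≤ a i ∧ b i + t i ≤ n + 1) :
    ∃ W : Finset (ℕ × ℕ), W ⊆ Lf ∧
      (∀ p ∈ W, ∀ q ∈ W, p.1 = q.1 → p = q) ∧ (∀ p ∈ W, ∀ q ∈ W, p.2 = q.2 → p = q) ∧
      (∀ i ∈ Set.Icc 1 s, (W.filter fun q => q.1 ≤ a i ∧ b i ≤ q.2).card + 1 = t i) ∧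
      (∀ d ∈ Lf, (∀ q ∈ W, ¬ (q.1 = d.1 ∧ d.2 ≤ q.2)) → (∀ q ∈ W, ¬ (q.2 = d.2 ∧ q.1 ≤ d.1)) →
        ∃ j ∈ Set.Icc 1 s, d ∈ ladderRegion a b n j ∧
          (W.filter fun q => q.1 ≤ d.1 ∧ d.2 ≤ q.2).card + 1 = t j) := by
  obtain ⟨W, hWL, hW⟩ := mli_exists_W a b t n s Lf (by
    intro p hp
    obtain ⟨i, _, hi⟩ := (hL p).1 hp
    exact hi.2.2.2)
  have hreg : ∀ p ∈ Lf, 1 ≤ p.1 ∧ p.2 ≤ n := by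
    intro p hp
    obtain ⟨i, _, hi⟩ := (hL p).1 hp
    exact ⟨hi.1, hi.2.2.2⟩
  have hrow : ∀ p ∈ W, ∀ q ∈ W, p.1 = q.1 → p = q := by
    intro p hp q hq h
    by_contra hne
    rcases le_total p.2 q.2 with h2 | h2
    · exact ((hW p (hWL hp)).1 hp).1 q hq (Ne.symm hne) ⟨h.symm, h2⟩
    · exact ((hW q (hWL hq)).1 hq).1 p hp hne ⟨h, h2⟩
  have hcol : ∀ p ∈ W, ∀ q ∈ W, p.2 = q.2 → p = q := by
    intro p hp q hq h
    by_contra hne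
    rcases le_total p.1 q.1 with h2 | h2
    · exact ((hW q (hWL hq)).1 hq).2.1 p hp hne ⟨h, h2⟩
    · exact ((hW p (hWL hp)).1 hp).2.1 q hq (Ne.symm hne) ⟨h.symm, h2⟩
  -- inside one region the pivots form a chain
  have hchain : ∀ i ∈ Set.Icc 1 s, ∀ p ∈ W, ∀ q ∈ W, p ∈ ladderRegion a b n i →
      q ∈ ladderRegion a b n i → ¬ (q.1 < p.1 ∧ q.2 < p.2) := by
    rintro i hi ⟨x, y⟩ hp ⟨x', y'⟩ hq hpi hqi ⟨h1, h2⟩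
    simp only at h1 h2
    obtain ⟨p1, p2, p3, p4⟩ := hpi
    obtain ⟨q1, q2, q3, q4⟩ := hqi
    simp only at p1 p2 p3 p4 q1 q2 q3 q4
    have hzi : (x', y) ∈ ladderRegion a b n i := ⟨q1, q2, p3, p4⟩
    have hzL : (x', y) ∈ Lf := (hL _).2 ⟨i, hi, hzi⟩
    have hzW : (x', y) ∉ W := by
      intro hz
      have := hrow _ hz _ hq rfl
      simp only [Prod.mk.injEq] at this
      omega
    have hfail : ∃ j ∈ Set.Icc 1 s, (x', y) ∈ ladderRegion a b n j ∧
        t j ≤ (W.filter (fun q => q.1 < x' ∧ y < q.2)).card + 1 := by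
      by_contra hcon
      push Not at hcon
      apply hzW
      rw [hW _ hzL]
      refine ⟨?_, ?_, fun j hj hzj => hcon j hj hzj⟩
      · rintro w hw - ⟨e1, e2⟩
        have := hrow w hw _ hq e1
        rw [this] at e2
        simp only at e2
        omega
      · rintro w hw - ⟨e1, e2⟩
        have := hcol w hw _ hp e1
        rw [this] at e2
        simp only at e2
        omega
    obtain ⟨j, hj, hzj, hcard⟩ := hfail
    have hqj : (x', y') ∉ ladderRegion a b n j := by
      intro h
      have := ((hW _ (hWL hq)).1 hq).2.2 j hj h
      have hle : (W.filter (fun q => q.1 < x' ∧ y < q.2)).card ≤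
          (W.filter (fun q => q.1 < x' ∧ y' < q.2)).card := by
        apply Finset.card_le_card
        intro w hw
        rw [Finset.mem_filter] at hw ⊢
        exact ⟨hw.1, hw.2.1, by omega⟩
      simp only at this
      omega
    have hpj : (x, y) ∉ ladderRegion a b n j := by
      intro h
      have := ((hW _ (hWL hp)).1 hp).2.2 j hj h
      have hle : (W.filter (fun q => q.1 < x' ∧ y < q.2)).card ≤
          (W.filter (fun q => q.1 < x ∧ y < q.2)).card := by
        apply Finset.card_le_card
        intro w hw
        rw [Finset.mem_filter] at hw ⊢
        exact ⟨hw.1, by omega, hw.2.2⟩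
      simp only at this
      omega
    obtain ⟨z1, z2, z3, z4⟩ := hzj
    simp only at z1 z2 z3 z4
    have k1 : y' < b j := by
      by_contra hk
      exact hqj ⟨q1, z2, by simp only; omega, q4⟩
    have k2 : a j < x := by
      by_contra hk
      exact hpj ⟨p1, by simp only; omega, z3, p4⟩
    rcases le_total i j with h | h
    · have := ha i j hi.1 h hj.2
      omega
    · have := hb j i hj.1 h hi.2
      omega
  have hWreg : ∀ i, ∀ q ∈ W, q.1 ≤ a i → b i ≤ q.2 → q ∈ ladderRegion a b n i := by
    intro i q hq h1 h2
    have := hreg q (hWL hq)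
    exact ⟨this.1, h1, h2, this.2⟩
  have hle : ∀ i ∈ Set.Icc 1 s, (W.filter fun q => q.1 ≤ a i ∧ b i ≤ q.2).card + 1 ≤ t i := by
    intro i hi
    rcases (W.filter fun q => q.1 ≤ a i ∧ b i ≤ q.2).eq_empty_or_nonempty with he | hne
    · rw [he]
      simpa using (hsize i hi).1
    · obtain ⟨p, hp, hmax⟩ := Finset.exists_max_image _ (fun q : ℕ × ℕ => q.1) hne
      have hp' := Finset.mem_filter.1 hp
      have hpi := hWreg i p hp'.1 hp'.2.1 hp'.2.2
      have hlt := ((hW p (hWL hp'.1)).1 hp'.1).2.2 i hi hpi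
      have hsub : (W.filter fun q => q.1 ≤ a i ∧ b i ≤ q.2).erase p ⊆
          W.filter (fun q => q.1 < p.1 ∧ p.2 < q.2) := by
        intro q hq
        rw [Finset.mem_erase] at hq
        have hq' := Finset.mem_filter.1 hq.2
        have hqi := hWreg i q hq'.1 hq'.2.1 hq'.2.2
        have e1 : q.1 ≤ p.1 := hmax q hq.2
        have e2 : q.1 ≠ p.1 := fun h => hq.1 (hrow q hq'.1 p hp'.1 h)
        have e3 : q.2 ≠ p.2 := fun h => hq.1 (hcol q hq'.1 p hp'.1 h)
        have e4 := hchain i hi p hp'.1 q hq'.1 hpi hqi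
        refine Finset.mem_filter.2 ⟨hq'.1, by omega, by omega⟩
      have := Finset.card_le_card hsub
      rw [Finset.card_erase_of_mem hp] at this
      omega
  have hD : ∀ d ∈ Lf, (∀ q ∈ W, ¬ (q.1 = d.1 ∧ d.2 ≤ q.2)) →
      (∀ q ∈ W, ¬ (q.2 = d.2 ∧ q.1 ≤ d.1)) →
        ∃ j ∈ Set.Icc 1 s, d ∈ ladderRegion a b n j ∧
          (W.filter fun q => q.1 ≤ d.1 ∧ d.2 ≤ q.2).card + 1 = t j := by
    intro d hd h1 h2
    have hdW : d ∉ W := fun h => h1 d h ⟨rfl, le_rfl⟩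
    have hfail : ∃ j ∈ Set.Icc 1 s, d ∈ ladderRegion a b n j ∧
        t j ≤ (W.filter (fun q => q.1 < d.1 ∧ d.2 < q.2)).card + 1 := by
      by_contra hcon
      push Not at hcon
      apply hdW
      rw [hW _ hd]
      exact ⟨fun q hq _ => h1 q hq, fun q hq _ => h2 q hq, fun j hj hzj => hcon j hj hzj⟩
    obtain ⟨j, hj, hdj, hc⟩ := hfail
    refine ⟨j, hj, hdj, ?_⟩
    have e1 := hle j hj
    have e2 : (W.filter (fun q => q.1 < d.1 ∧ d.2 < q.2)).card ≤
        (W.filter (fun q => q.1 ≤ d.1 ∧ d.2 ≤ q.2)).card := by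
      apply Finset.card_le_card
      intro w hw
      rw [Finset.mem_filter] at hw ⊢
      exact ⟨hw.1, by omega, by omega⟩
    have e3 : (W.filter (fun q => q.1 ≤ d.1 ∧ d.2 ≤ q.2)).card ≤
        (W.filter (fun q => q.1 ≤ a j ∧ b j ≤ q.2)).card := by
      apply Finset.card_le_card
      intro w hw
      obtain ⟨z1, z2, z3, z4⟩ := hdj
      rw [Finset.mem_filter] at hw ⊢
      exact ⟨hw.1, by omega, by omega⟩
    omega
  refine ⟨W, hWL, hrow, hcol, fun i hi => ?_, hD⟩
  refine le_antisymm (hle i hi) ?_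
  by_contra hlt
  rw [not_le] at hlt
  obtain ⟨s1, s2, s3⟩ := hsize i hi
  set Wi := W.filter fun q => q.1 ≤ a i ∧ b i ≤ q.2 with hWi
  -- free rows and columns of the region
  have hRne : (Finset.Icc 1 (a i) \ Wi.image Prod.fst).Nonempty := by
    rw [← Finset.card_pos]
    have e1 := Finset.le_card_sdiff (Wi.image Prod.fst) (Finset.Icc 1 (a i))
    have e2 := Finset.card_image_le (s := Wi) (f := Prod.fst)
    rw [Nat.card_Icc] at e1
    omega
  have hCne : (Finset.Icc (b i) n \ Wi.image Prod.snd).Nonempty := by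
    rw [← Finset.card_pos]
    have e1 := Finset.le_card_sdiff (Wi.image Prod.snd) (Finset.Icc (b i) n)
    have e2 := Finset.card_image_le (s := Wi) (f := Prod.snd)
    rw [Nat.card_Icc] at e1
    omega
  obtain ⟨x, hx, hxmax⟩ := Finset.exists_max_image _ (fun x : ℕ => x) hRne
  obtain ⟨y, hy, hymin⟩ := Finset.exists_min_image _ (fun x : ℕ => x) hCne
  simp only [Finset.mem_sdiff, Finset.mem_Icc] at hx hy hxmax hymin
  have hdi : (x, y) ∈ ladderRegion a b n i := ⟨hx.1.1, hx.1.2, hy.1.1, hy.1.2⟩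
  obtain ⟨j, hj, ⟨z1, z2, z3, z4⟩, hjc⟩ := hD (x, y) ((hL _).2 ⟨i, hi, hdi⟩)
    (by
      rintro q hq ⟨e1, e2⟩
      apply hx.2
      simp only at e1 e2
      exact Finset.mem_image.2 ⟨q, Finset.mem_filter.2 ⟨hq, by omega, by omega⟩, e1⟩)
    (by
      rintro q hq ⟨e1, e2⟩
      apply hy.2
      simp only at e1 e2
      exact Finset.mem_image.2 ⟨q, Finset.mem_filter.2 ⟨hq, by omega, by omega⟩, e1⟩)
  simp only at z1 z2 z3 z4 hjc
  have hNEsub : (W.filter fun q => q.1 ≤ x ∧ y ≤ q.2) ⊆ Wi := by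
    intro w hw
    rw [Finset.mem_filter] at hw ⊢
    exact ⟨hw.1, by omega, by omega⟩
  have hsd := Finset.card_sdiff_add_card_eq_card hNEsub
  rcases le_total i j with h | h
  · have g := hγ i j hi.1 h hj.2
    have hsub : Finset.Ico (b i) y ⊆
        (Wi \ (W.filter fun q => q.1 ≤ x ∧ y ≤ q.2)).image Prod.snd := by
      intro v hv
      rw [Finset.mem_Ico] at hv
      by_contra hcon
      have : v ∉ Wi.image Prod.snd := by
        intro hv2
        obtain ⟨q, hq, rfl⟩ := Finset.mem_image.1 hv2
        apply hcon
        refine Finset.mem_image.2 ⟨q, Finset.mem_sdiff.2 ⟨hq, fun h => ?_⟩, rfl⟩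
        have := (Finset.mem_filter.1 h).2.2
        omega
      have := hymin v ⟨⟨hv.1, by omega⟩, this⟩
      omega
    have e1 := Finset.card_le_card hsub
    have e2 := Finset.card_image_le (s := Wi \ (W.filter fun q => q.1 ≤ x ∧ y ≤ q.2))
      (f := Prod.snd)
    rw [Nat.card_Ico] at e1
    omega
  · have g := hα j i hj.1 h hi.2
    have hsub : Finset.Ioc x (a i) ⊆
        (Wi \ (W.filter fun q => q.1 ≤ x ∧ y ≤ q.2)).image Prod.fst := by
      intro v hv
      rw [Finset.mem_Ioc] at hv
      by_contra hcon
      have : v ∉ Wi.image Prod.fst := by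
        intro hv2
        obtain ⟨q, hq, rfl⟩ := Finset.mem_image.1 hv2
        apply hcon
        refine Finset.mem_image.2 ⟨q, Finset.mem_sdiff.2 ⟨hq, fun h => ?_⟩, rfl⟩
        have := (Finset.mem_filter.1 h).2.1
        omega
      have := hxmax v ⟨⟨by omega, hv.2⟩, this⟩
      omega
    have e1 := Finset.card_le_card hsub
    have e2 := Finset.card_image_le (s := Wi \ (W.filter fun q => q.1 ≤ x ∧ y ≤ q.2))
      (f := Prod.fst)
    rw [Nat.card_Ioc] at e1
    omega

/-- The relation expressing a row through the pivot rows. -/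
lemma mli_rel_pivot {F : Type*} [Field F] (M : ℕ → ℕ → F) (Wd : Finset (ℕ × ℕ)) (x y : ℕ)
    (hdet : Matrix.det (Matrix.of fun i j : Option Wd =>
      M (i.elim x fun p => p.1.1) (j.elim y fun p => p.1.2)) = 0)
    (hδ : Matrix.det (Matrix.of fun p q : Wd => M p.1.1 q.1.2) ≠ 0) :
    ∃ l : ℕ × ℕ → F, ∀ j ∈ insert y (Wd.image Prod.snd), M x j = ∑ p ∈ Wd, l p * M p.1 j := by
  classical
  obtain ⟨c, hc0, hc⟩ := Matrix.exists_vecMul_eq_zero_iff.2 hdet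
  have hc1 : ∀ k : Option Wd, c none * M x (k.elim y fun p => p.1.2) +
      ∑ p : Wd, c (some p) * M p.1.1 (k.elim y fun p => p.1.2) = 0 := by
    intro k
    have := congrFun hc k
    simpa [Matrix.vecMul, dotProduct, Fintype.sum_option] using this
  have hc2 : ∀ j ∈ insert y (Wd.image Prod.snd),
      c none * M x j + ∑ p : Wd, c (some p) * M p.1.1 j = 0 := by
    intro j hj
    rw [Finset.mem_insert] at hj
    rcases hj with rfl | hj
    · exact hc1 none
    · obtain ⟨q, hq, rfl⟩ := Finset.mem_image.1 hj
      exact hc1 (some ⟨q, hq⟩)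
  have hcx : c none ≠ 0 := by
    intro h0
    have hz : (fun p : Wd => c (some p)) = 0 := by
      apply Matrix.eq_zero_of_vecMul_eq_zero hδ
      ext q
      have := hc1 (some q)
      rw [h0, zero_mul, zero_add] at this
      simpa [Matrix.vecMul, dotProduct] using this
    apply hc0
    ext k
    rcases k with _ | p
    · exact h0
    · exact congrFun hz p
  refine ⟨fun p => if hp : p ∈ Wd then - c (some ⟨p, hp⟩) / c none else 0, fun j hj => ?_⟩
  have := hc2 j hj
  rw [← Finset.sum_coe_sort Wd]
  have h4 : ∑ p : Wd, (if hp : p.1 ∈ Wd then - c (some ⟨p.1, hp⟩) / c none else 0) * M p.1.1 j =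
      (- ∑ p : Wd, c (some p) * M p.1.1 j) / c none := by
    rw [← Finset.sum_neg_distrib, Finset.sum_div]
    refine Finset.sum_congr rfl fun u _ => ?_
    rw [dif_pos u.2]
    ring
  rw [h4, eq_div_iff hcx]
  linear_combination this

/-- truncated row vectors. -/
def mliV {F : Type*} [Field F] (M : ℕ → ℕ → F) (n x y : ℕ) : ℕ → F :=
  fun j => if y ≤ j ∧ j ≤ n then M x j else 0

lemma mli_rank {F : Type*} [Field F] (M : ℕ → ℕ → F) (n : ℕ) (Lf W : Finset (ℕ × ℕ))
    (hL1 : ∀ x y, (x, y) ∈ Lf → 1 ≤ x ∧ y ≤ n)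
    (hL2 : ∀ x y, (x, y) ∈ Lf → x - 1 = 0 ∨ (x - 1, y) ∈ Lf)
    (hL3 : ∀ x y, (x, y) ∈ Lf → n < y + 1 ∨ (x, y + 1) ∈ Lf)
    (hWL : W ⊆ Lf)
    (hD : ∀ x y, (x, y) ∈ Lf → (∀ q ∈ W, ¬ (q.1 = x ∧ y ≤ q.2)) →
      (∀ q ∈ W, ¬ (q.2 = y ∧ q.1 ≤ x)) →
      (∃ l : ℕ × ℕ → F, ∀ j ∈ insert y ((W.filter fun q => q.1 ≤ x ∧ y ≤ q.2).image Prod.snd),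
        M x j = ∑ p ∈ W.filter (fun q => q.1 ≤ x ∧ y ≤ q.2), l p * M p.1 j) ∧
      Matrix.det (Matrix.of fun p q : (W.filter fun q => q.1 ≤ x ∧ y ≤ q.2) =>
        M p.1.1 q.1.2) ≠ 0) :
    ∀ k x y, x + (n + 1 - y) ≤ k → (x = 0 ∨ n < y ∨ (x, y) ∈ Lf) →
      ∃ G : Finset (ℕ → F), G.card ≤ (W.filter fun q => q.1 ≤ x ∧ y ≤ q.2).card ∧
        ∀ u, 1 ≤ u → u ≤ x → mliV M n u y ∈ Submodule.span F (G : Set (ℕ → F)) := by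
  classical
  intro k
  induction k with
  | zero =>
    intro x y hk _
    exact ⟨∅, by simp, fun u h1 h2 => by omega⟩
  | succ k ih =>
    intro x y hk h
    by_cases hx0 : x = 0
    · exact ⟨∅, by simp, fun u h1 h2 => by omega⟩
    by_cases hyn : n < y
    · refine ⟨∅, by simp, fun u h1 h2 => ?_⟩
      have : mliV M n u y = 0 := by
        ext j
        simp only [mliV, Pi.zero_apply]
        rw [if_neg (by omega)]
      rw [this]
      exact Submodule.zero_mem _
    have hxy : (x, y) ∈ Lf := by
      rcases h with h | h | h
      · exact absurd h hx0
      · exact absurd h hyn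
      · exact h
    obtain ⟨G1, hG1, hG1'⟩ := ih (x - 1) y (by omega) (by
      rcases hL2 x y hxy with h | h
      · exact Or.inl h
      · exact Or.inr (Or.inr h))
    obtain ⟨G2, hG2, hG2'⟩ := ih x (y + 1) (by omega) (Or.inr (hL3 x y hxy))
    by_cases hr : ∃ q ∈ W, q.1 = x ∧ y ≤ q.2
    · obtain ⟨q, hq, hq1, hq2⟩ := hr
      refine ⟨insert (mliV M n x y) G1, ?_, ?_⟩
      · refine (Finset.card_insert_le _ _).trans ?_
        have hlt : (W.filter fun q => q.1 ≤ x - 1 ∧ y ≤ q.2).card <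
            (W.filter fun q => q.1 ≤ x ∧ y ≤ q.2).card := by
          apply Finset.card_lt_card
          rw [Finset.ssubset_iff_of_subset]
          · refine ⟨q, Finset.mem_filter.2 ⟨hq, hq1.le, hq2⟩, fun hh => ?_⟩
            have := (Finset.mem_filter.1 hh).2.1
            omega
          · intro w hw
            rw [Finset.mem_filter] at hw ⊢
            exact ⟨hw.1, by omega, hw.2.2⟩
        omega
      · intro u h1 h2
        rw [Finset.coe_insert]
        by_cases hux : u = x
        · rw [hux]
          exact Submodule.subset_span (Set.mem_insert _ _)
        · exact Submodule.span_mono (Set.subset_insert _ _) (hG1' u h1 (by omega))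
    by_cases hc : ∃ q ∈ W, q.2 = y ∧ q.1 ≤ x
    · obtain ⟨q, hq, hq1, hq2⟩ := hc
      refine ⟨insert (Pi.single y 1) G2, ?_, ?_⟩
      · refine (Finset.card_insert_le _ _).trans ?_
        have hlt : (W.filter fun q => q.1 ≤ x ∧ y + 1 ≤ q.2).card <
            (W.filter fun q => q.1 ≤ x ∧ y ≤ q.2).card := by
          apply Finset.card_lt_card
          rw [Finset.ssubset_iff_of_subset]
          · refine ⟨q, Finset.mem_filter.2 ⟨hq, hq2, hq1.ge⟩, fun hh => ?_⟩
            have := (Finset.mem_filter.1 hh).2.2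
            omega
          · intro w hw
            rw [Finset.mem_filter] at hw ⊢
            exact ⟨hw.1, hw.2.1, by omega⟩
        omega
      · intro u h1 h2
        rw [Finset.coe_insert]
        have : mliV M n u y = mliV M n u (y + 1) + M u y • Pi.single y (1 : F) := by
          ext j
          simp only [mliV, Pi.add_apply, Pi.smul_apply, smul_eq_mul]
          by_cases hj : j = y
          · subst hj
            rw [if_pos (by omega), if_neg (by omega)]
            simp
          · rw [Pi.single_eq_of_ne hj]
            have : (y ≤ j ∧ j ≤ n) ↔ (y + 1 ≤ j ∧ j ≤ n) := by omega
            simp only [this]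
            ring
        rw [this]
        refine Submodule.add_mem _ ?_ (Submodule.smul_mem _ _ (Submodule.subset_span
          (Set.mem_insert _ _)))
        exact Submodule.span_mono (Set.subset_insert _ _) (hG2' u h1 h2)
    push Not at hr hc
    have hr' : ∀ q ∈ W, ¬ (q.1 = x ∧ y ≤ q.2) := by
      rintro q hq ⟨h1, h2⟩
      have := hr q hq h1
      omega
    have hc' : ∀ q ∈ W, ¬ (q.2 = y ∧ q.1 ≤ x) := by
      rintro q hq ⟨h1, h2⟩
      have := hc q hq h1
      omega
    obtain ⟨⟨l, hl⟩, hδ⟩ := hD x y hxy hr' hc'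
    set Wd := W.filter fun q => q.1 ≤ x ∧ y ≤ q.2 with hWd
    have hWd' : ∀ q ∈ Wd, 1 ≤ q.1 ∧ q.1 ≤ x - 1 ∧ y + 1 ≤ q.2 ∧ q.2 ≤ n := by
      intro q hq
      obtain ⟨h1, h2, h3⟩ := Finset.mem_filter.1 hq
      have e1 := hL1 q.1 q.2 (hWL h1)
      have e2 : q.1 ≠ x := fun h => hr' q h1 ⟨h, h3⟩
      have e3 : q.2 ≠ y := fun h => hc' q h1 ⟨h, h2⟩
      omega
    have hcard2 : G2.card ≤ Wd.card := by
      refine hG2.trans (Finset.card_le_card ?_)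
      intro w hw
      rw [Finset.mem_filter] at hw
      exact Finset.mem_filter.2 ⟨hw.1, hw.2.1, by omega⟩
    have hcard1 : G1.card ≤ Wd.card := by
      refine hG1.trans (Finset.card_le_card ?_)
      intro w hw
      rw [Finset.mem_filter] at hw
      exact Finset.mem_filter.2 ⟨hw.1, by omega, hw.2.2⟩
    refine ⟨G1, hcard1, ?_⟩
    -- the restriction map to the pivot columns is injective
    let E := Submodule.span F (G2 : Set (ℕ → F))
    let π : E →ₗ[F] (Wd → F) :=
      (LinearMap.funLeft F F (fun q : Wd => q.1.2)).comp E.subtype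
    have hπ : ∀ (e : E) (q : Wd), π e q = e.1 q.1.2 := fun e q => rfl
    have hmemE : ∀ q ∈ Wd, mliV M n q.1 (y + 1) ∈ E := by
      intro q hq
      have := hWd' q hq
      exact hG2' q.1 this.1 (by omega)
    have hsurj : Function.Surjective π := by
      intro z
      obtain ⟨c, hc⟩ : ∃ c : Wd → F,
          Matrix.vecMul c (Matrix.of fun p q : Wd => M p.1.1 q.1.2) = z := by
        refine ⟨Matrix.vecMul z (Matrix.of fun p q : Wd => M p.1.1 q.1.2)⁻¹, ?_⟩
        rw [Matrix.vecMul_vecMul, Matrix.nonsing_inv_mul _ (isUnit_iff_ne_zero.2 hδ),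
          Matrix.vecMul_one]
      refine ⟨∑ p : Wd, c p • ⟨mliV M n p.1.1 (y + 1), hmemE p.1 p.2⟩, ?_⟩
      rw [← hc]
      ext q
      have hq := hWd' q.1 q.2
      rw [map_sum, Finset.sum_apply]
      simp only [Matrix.vecMul, dotProduct, Matrix.of_apply]
      refine Finset.sum_congr rfl fun p _ => ?_
      rw [map_smul, Pi.smul_apply, hπ, smul_eq_mul]
      simp only [mliV]
      rw [if_pos ⟨hq.2.2.1, hq.2.2.2⟩]
    have hfinE : FiniteDimensional F E := FiniteDimensional.span_finset F G2
    have hfr : Module.finrank F E = Module.finrank F (Wd → F) := by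
      apply le_antisymm
      · rw [Module.finrank_fintype_fun_eq_card, Fintype.card_coe]
        exact (finrank_span_finset_le_card G2).trans hcard2
      · exact LinearMap.finrank_le_finrank_of_surjective hsurj
    have hinj : Function.Injective π :=
      (LinearMap.injective_iff_surjective_of_finrank_eq_finrank hfr).2 hsurj
    have hzE : mliV M n x (y + 1) - ∑ p ∈ Wd, l p • mliV M n p.1 (y + 1) ∈ E := by
      refine Submodule.sub_mem _ (hG2' x (by omega) le_rfl) (Submodule.sum_mem _ fun p hp => ?_)
      exact Submodule.smul_mem _ _ (hmemE p hp)
    have hz : (⟨_, hzE⟩ : E) = 0 := by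
      apply hinj
      rw [map_zero]
      ext q
      rw [hπ]
      have hq := hWd' q.1 q.2
      have := hl q.1.2 (Finset.mem_insert_of_mem (Finset.mem_image_of_mem _ q.2))
      simp only [Pi.sub_apply, Finset.sum_apply, Pi.smul_apply, smul_eq_mul, mliV, Pi.zero_apply]
      simp only [if_pos (show y + 1 ≤ q.1.2 ∧ q.1.2 ≤ n from ⟨hq.2.2.1, hq.2.2.2⟩)]
      rw [this, sub_self]
    have hz' : ∀ j, mliV M n x (y + 1) j = ∑ p ∈ Wd, l p * mliV M n p.1 (y + 1) j := by
      intro j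
      have := congrFun (congrArg Subtype.val hz) j
      simp only [Pi.sub_apply, Finset.sum_apply, Pi.smul_apply, smul_eq_mul] at this
      exact sub_eq_zero.1 this
    have hfin : mliV M n x y = ∑ p ∈ Wd, l p • mliV M n p.1 y := by
      ext j
      simp only [Finset.sum_apply, Pi.smul_apply, smul_eq_mul]
      by_cases hj : j = y
      · have := hl y (Finset.mem_insert_self _ _)
        rw [hj]
        simp only [mliV]
        simp only [if_pos (show y ≤ y ∧ y ≤ n by omega)]
        exact this
      · have h1 := hz' j
        simp only [mliV] at h1 ⊢
        have : (y ≤ j ∧ j ≤ n) ↔ (y + 1 ≤ j ∧ j ≤ n) := by omega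
        simp only [this]
        exact h1
    intro u h1 h2
    by_cases hux : u = x
    · rw [hux, hfin]
      refine Submodule.sum_mem _ fun p hp => Submodule.smul_mem _ _ ?_
      have := hWd' p hp
      exact hG1' p.1 this.1 this.2.1
    · exact hG1' u h1 (by omega)

lemma mli_minor_vanish {F : Type*} [Field F] (M : ℕ → ℕ → F) (n x y t : ℕ)
    (G : Finset (ℕ → F)) (hG : G.card < t)
    (hspan : ∀ u, 1 ≤ u → u ≤ x → mliV M n u y ∈ Submodule.span F (G : Set (ℕ → F)))
    (r c : Fin t → ℕ) (hr : ∀ i, 1 ≤ r i ∧ r i ≤ x) (hc : ∀ j, y ≤ c j ∧ c j ≤ n) :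
    Matrix.det (Matrix.of fun i j => M (r i) (c j)) = 0 := by
  by_contra hdet
  have h1 : LinearIndependent F (Matrix.of fun i j => M (r i) (c j)).row := by
    rw [Matrix.linearIndependent_rows_iff_isUnit, Matrix.isUnit_iff_isUnit_det]
    exact isUnit_iff_ne_zero.2 hdet
  have h2 : LinearIndependent F (fun i => mliV M n (r i) y) := by
    apply LinearIndependent.of_comp (LinearMap.funLeft F F c)
    convert h1 using 1
    ext i j
    simp [LinearMap.funLeft, mliV, hc j]
  have h3 := linearIndependent_le_span' _ h2 (G : Set (ℕ → F)) (by
    rintro _ ⟨i, rfl⟩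
    exact hspan _ (hr i).1 (hr i).2)
  simp at h3
  omega

lemma mli_D_card (a b t : ℕ → ℕ) (n s : ℕ) (hs : 1 ≤ s) (Lf W D : Finset (ℕ × ℕ))
    (hL : ∀ p, p ∈ Lf ↔ ∃ i ∈ Set.Icc 1 s, p ∈ ladderRegion a b n i)
    (hmono : ∀ i, 1 ≤ i → i < s → a i ≤ a (i + 1) ∧ b i ≤ b (i + 1))
    (hα : ∀ i, 1 ≤ i → i < s → a i - t i + 1 ≤ a (i + 1) - t (i + 1) + 1)
    (hγ : ∀ i, 1 ≤ i → i < s → b i + t i - 1 ≤ b (i + 1) + t (i + 1) - 1)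
    (hsize : ∀ i ∈ Set.Icc 1 s, 1 ≤ t i ∧ t i ≤ a i ∧ b i + t i ≤ n + 1)
    (hWL : W ⊆ Lf) (hrow : ∀ p ∈ W, ∀ q ∈ W, p.1 = q.1 → p = q)
    (hcol : ∀ p ∈ W, ∀ q ∈ W, p.2 = q.2 → p = q)
    (hcard : ∀ i ∈ Set.Icc 1 s, (W.filter fun q => q.1 ≤ a i ∧ b i ≤ q.2).card + 1 = t i)
    (hD : ∀ d ∈ D, (∀ q ∈ W, ¬ (q.1 = d.1 ∧ d.2 ≤ q.2)) ∧
      (∀ q ∈ W, ¬ (q.2 = d.2 ∧ q.1 ≤ d.1)) ∧ ∃ j ∈ Set.Icc 1 s, d ∈ ladderRegion a b n j ∧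
          (W.filter fun q => q.1 ≤ d.1 ∧ d.2 ≤ q.2).card + 1 = t j) :
    D.card ≤ ((Finset.Icc 1 s).biUnion fun i => Finset.Icc 1 (a i - t i + 1) ×ˢ
      Finset.Icc (b i + t i - 1) n).card := by
  have hreg : ∀ p ∈ Lf, 1 ≤ p.1 ∧ p.2 ≤ n := by
    intro p hp
    obtain ⟨i, _, hi⟩ := (hL p).1 hp
    exact ⟨hi.1, hi.2.2.2⟩
  let Wi : ℕ → Finset (ℕ × ℕ) := fun i => W.filter fun q => q.1 ≤ a i ∧ b i ≤ q.2
  let R : ℕ → Finset ℕ := fun i => Finset.Icc 1 (a i) \ (W.filter fun q => b i ≤ q.2).image Prod.fst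
  let C : ℕ → Finset ℕ := fun i => Finset.Icc (b i) n \ (W.filter fun q => q.1 ≤ a i).image Prod.snd
  have hR : ∀ i, R i = Finset.Icc 1 (a i) \ (Wi i).image Prod.fst := by
    intro i
    ext u
    simp only [R, Wi, Finset.mem_sdiff, Finset.mem_image, Finset.mem_filter, Finset.mem_Icc]
    refine and_congr_right fun hu => not_congr ⟨?_, ?_⟩
    · rintro ⟨q, ⟨h1, h2⟩, rfl⟩
      exact ⟨q, ⟨h1, hu.2, h2⟩, rfl⟩
    · rintro ⟨q, ⟨h1, h2, h3⟩, rfl⟩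
      exact ⟨q, ⟨h1, h3⟩, rfl⟩
  have hC : ∀ i, C i = Finset.Icc (b i) n \ (Wi i).image Prod.snd := by
    intro i
    ext u
    simp only [C, Wi, Finset.mem_sdiff, Finset.mem_image, Finset.mem_filter, Finset.mem_Icc]
    refine and_congr_right fun hu => not_congr ⟨?_, ?_⟩
    · rintro ⟨q, ⟨h1, h2⟩, rfl⟩
      exact ⟨q, ⟨h1, h2, hu.1⟩, rfl⟩
    · rintro ⟨q, ⟨h1, h2, h3⟩, rfl⟩
      exact ⟨q, ⟨h1, h2⟩, rfl⟩
  have hsub : D ⊆ (Finset.Icc 1 s).biUnion fun i => R i ×ˢ C i := by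
    intro d hd
    obtain ⟨h1, h2, i, hi, ⟨g1, g2, g3, g4⟩, hc⟩ := hD d hd
    have heq : (W.filter fun q => q.1 ≤ d.1 ∧ d.2 ≤ q.2) = Wi i := by
      apply Finset.eq_of_subset_of_card_le
      · intro w hw
        rw [Finset.mem_filter] at hw
        exact Finset.mem_filter.2 ⟨hw.1, by omega, by omega⟩
      · have := hcard i hi
        show (W.filter fun q => q.1 ≤ a i ∧ b i ≤ q.2).card ≤ _
        omega
    refine Finset.mem_biUnion.2 ⟨i, Finset.mem_Icc.2 hi, Finset.mem_product.2 ⟨?_, ?_⟩⟩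
    · rw [hR, ← heq, Finset.mem_sdiff, Finset.mem_Icc]
      refine ⟨⟨g1, g2⟩, fun hh => ?_⟩
      obtain ⟨q, hq, hq2⟩ := Finset.mem_image.1 hh
      rw [Finset.mem_filter] at hq
      exact h1 q hq.1 ⟨hq2, hq.2.2⟩
    · rw [hC, ← heq, Finset.mem_sdiff, Finset.mem_Icc]
      refine ⟨⟨g3, g4⟩, fun hh => ?_⟩
      obtain ⟨q, hq, hq2⟩ := Finset.mem_image.1 hh
      rw [Finset.mem_filter] at hq
      exact h2 q hq.1 ⟨hq2, hq.2.1⟩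
  refine (Finset.card_le_card hsub).trans ?_
  apply mli_card_compare R C _ _ s hs
  · intro i h1 h2 u hu
    obtain ⟨e1, e2⟩ := hmono i h1 h2
    simp only [R, Finset.mem_sdiff, Finset.mem_image, Finset.mem_filter, Finset.mem_Icc] at hu ⊢
    refine ⟨⟨hu.1.1, by omega⟩, fun hh => hu.2 ?_⟩
    obtain ⟨q, ⟨hq1, hq2⟩, hq3⟩ := hh
    exact ⟨q, ⟨hq1, by omega⟩, hq3⟩
  · intro i h1 h2 u hu
    obtain ⟨e1, e2⟩ := hmono i h1 h2
    simp only [C, Finset.mem_sdiff, Finset.mem_image, Finset.mem_filter, Finset.mem_Icc] at hu ⊢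
    refine ⟨⟨by omega, hu.1.2⟩, fun hh => hu.2 ?_⟩
    obtain ⟨q, ⟨hq1, hq2⟩, hq3⟩ := hh
    exact ⟨q, ⟨hq1, by omega⟩, hq3⟩
  · exact fun i h1 h2 => Finset.Icc_subset_Icc le_rfl (hα i h1 h2)
  · exact fun i h1 h2 => Finset.Icc_subset_Icc (hγ i h1 h2) le_rfl
  · intro i h1 h2
    obtain ⟨s1, s2, s3⟩ := hsize i ⟨h1, h2⟩
    have hc : (Wi i).card + 1 = t i := hcard i ⟨h1, h2⟩
    rw [hR, Finset.card_sdiff_of_subset, Finset.card_image_of_injOn, Nat.card_Icc, Nat.card_Icc]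
    · omega
    · intro p hp q hq hpq
      exact hrow p (Finset.mem_filter.1 hp).1 q (Finset.mem_filter.1 hq).1 hpq
    · intro u hu
      obtain ⟨q, hq, rfl⟩ := Finset.mem_image.1 hu
      rw [Finset.mem_filter] at hq
      exact Finset.mem_Icc.2 ⟨(hreg q (hWL hq.1)).1, hq.2.1⟩
  · intro i h1 h2
    obtain ⟨s1, s2, s3⟩ := hsize i ⟨h1, h2⟩
    have hc : (Wi i).card + 1 = t i := hcard i ⟨h1, h2⟩
    rw [hC, Finset.card_sdiff_of_subset, Finset.card_image_of_injOn, Nat.card_Icc, Nat.card_Icc]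
    · omega
    · intro p hp q hq hpq
      exact hcol p (Finset.mem_filter.1 hp).1 q (Finset.mem_filter.1 hq).1 hpq
    · intro u hu
      obtain ⟨q, hq, rfl⟩ := Finset.mem_image.1 hu
      rw [Finset.mem_filter] at hq
      exact Finset.mem_Icc.2 ⟨hq.2.2, (hreg q (hWL hq.1)).2⟩

open Classical in
/-- the variable at a position, zero outside the ladder. -/
noncomputable def mliX (K : Type*) [Field K] (L : Set (ℕ × ℕ)) (u v : ℕ) : MvPolynomial L K :=
  if h : (u, v) ∈ L then X ⟨(u, v), h⟩ else 0

lemma mliX_map {K F : Type*} [Field K] [Field F] [Algebra K F] {L : Set (ℕ × ℕ)}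
    (f : MvPolynomial L K →ₐ[K] F) (u v : ℕ) : f (mliX K L u v) = mliM f u v := by
  unfold mliX mliM
  split_ifs <;> simp

lemma mliX_det {K F ι : Type*} [Field K] [Field F] [Algebra K F] {L : Set (ℕ × ℕ)}
    [Fintype ι] [DecidableEq ι]
    (f : MvPolynomial L K →ₐ[K] F) (u v : ι → ℕ) :
    f (Matrix.det (Matrix.of fun i j => mliX K L (u i) (v j))) =
      Matrix.det (Matrix.of fun i j => mliM f (u i) (v j)) := by
  rw [AlgHom.map_det]
  congr 1
  ext i j
  simp [mliX_map]

lemma mli_exists_field.{uK, uR} {K : Type uK} {R : Type uR} [Field K] [CommRing R] [Algebra K R]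
    (P : Ideal R) [P.IsPrime] :
    ∃ (F : Type uR) (_ : Field F) (_ : Algebra K F) (f : R →ₐ[K] F), ∀ p, f p = 0 ↔ p ∈ P := by
  refine ⟨FractionRing (R ⧸ P), inferInstance, inferInstance,
    (IsScalarTower.toAlgHom K (R ⧸ P) (FractionRing (R ⧸ P))).comp (Ideal.Quotient.mkₐ K P), ?_⟩
  intro p
  simp only [AlgHom.comp_apply, IsScalarTower.coe_toAlgHom', Ideal.Quotient.mkₐ_eq_mk]
  rw [map_eq_zero_iff _ (IsFractionRing.injective (R ⧸ P) (FractionRing (R ⧸ P))),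
    Ideal.Quotient.eq_zero_iff_mem]

open Classical in
theorem mli_upper {K : Type*} [Field K] {L : Set (ℕ × ℕ)}
    (a b t : ℕ → ℕ) (n s : ℕ) (hs : 1 ≤ s) (hLfin : L.Finite)
    (hmono : ∀ i, 1 ≤ i → i < s → a i ≤ a (i + 1) ∧ b i ≤ b (i + 1))
    (hα : ∀ i, 1 ≤ i → i < s → a i - t i + 1 ≤ a (i + 1) - t (i + 1) + 1)
    (hγ : ∀ i, 1 ≤ i → i < s → b i + t i - 1 ≤ b (i + 1) + t (i + 1) - 1)
    (hα2 : ∀ i j, 1 ≤ i → i ≤ j → j ≤ s → a i + t j ≤ a j + t i)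
    (hγ2 : ∀ i j, 1 ≤ i → i ≤ j → j ≤ s → b i + t i ≤ b j + t j)
    (hdecomp : L = ⋃ i ∈ Set.Icc 1 s, ladderRegion a b n i)
    (hsize : ∀ i ∈ Set.Icc 1 s, 1 ≤ t i ∧ t i ≤ a i ∧ b i + t i ≤ n + 1) :
    ∃ P : Ideal (MvPolynomial L K), P.IsPrime ∧ mixedLadderIdeal K L a b t n s ≤ P ∧
      P.height ≤ ((((Finset.Icc 1 s).biUnion fun i => Finset.Icc 1 (a i - t i + 1) ×ˢ
        Finset.Icc (b i + t i - 1) n).card : ℕ) : ℕ∞) := by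
  have hfinL : Finite L := hLfin
  let Lf : Finset (ℕ × ℕ) := hLfin.toFinset
  have hLf : ∀ p, p ∈ Lf ↔ p ∈ L := fun p => hLfin.mem_toFinset
  have hL : ∀ p, p ∈ Lf ↔ ∃ i ∈ Set.Icc 1 s, p ∈ ladderRegion a b n i := by
    intro p
    rw [hLf, hdecomp]
    simp only [Set.mem_iUnion, exists_prop]
  obtain ⟨W, hWL, hrow, hcol, hcard, hWD⟩ := mli_greedy a b t n s Lf hL
    (mli_mono_chain a s (fun i h1 h2 => (hmono i h1 h2).1))
    (mli_mono_chain b s (fun i h1 h2 => (hmono i h1 h2).2)) hα2 hγ2 hsize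
  let D : Finset (ℕ × ℕ) := Lf.filter fun d => (∀ q ∈ W, ¬ (q.1 = d.1 ∧ d.2 ≤ q.2)) ∧
      (∀ q ∈ W, ¬ (q.2 = d.2 ∧ q.1 ≤ d.1))
  have hDcard := mli_D_card a b t n s hs Lf W D hL hmono hα hγ hsize hWL hrow hcol hcard (by
    intro d hd
    obtain ⟨h1, h2, h3⟩ := Finset.mem_filter.1 hd
    exact ⟨h2, h3, hWD d h1 h2 h3⟩)
  -- the pivots to the north-east
  let NE : ℕ × ℕ → Finset (ℕ × ℕ) := fun d => W.filter fun q => q.1 ≤ d.1 ∧ d.2 ≤ q.2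
  let g : ℕ × ℕ → MvPolynomial L K := fun d => Matrix.det (Matrix.of fun i j : Option (NE d) =>
      mliX K L (i.elim d.1 fun p => p.1.1) (j.elim d.2 fun p => p.1.2))
  let w : MvPolynomial L K →ₐ[K] K := aeval fun e : L => if e.1 ∈ W then (1 : K) else 0
  have hw : ∀ u v, mliM w u v = if (u, v) ∈ W then (1 : K) else 0 := by
    intro u v
    by_cases h : (u, v) ∈ L
    · rw [mliM_mem w u v h]
      simp [w]
    · have : (u, v) ∉ W := fun h2 => h ((hLf _).1 (hWL h2))
      simp [mliM, h, this]
  have hprime : (RingHom.ker w).IsPrime := RingHom.ker_isPrime _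
  have hJ : Ideal.span ((D.image g : Finset _) : Set (MvPolynomial L K)) ≤ RingHom.ker w := by
    rw [Ideal.span_le]
    intro p hp
    rw [Finset.mem_coe, Finset.mem_image] at hp
    obtain ⟨d, hd, rfl⟩ := hp
    obtain ⟨h1, h2, h3⟩ := Finset.mem_filter.1 hd
    rw [SetLike.mem_coe, RingHom.mem_ker]
    show w (Matrix.det _) = 0
    rw [mliX_det]
    apply Matrix.det_eq_zero_of_row_eq_zero none
    intro j
    rw [Matrix.of_apply, hw, if_neg]
    intro hh
    refine h2 _ hh ⟨rfl, ?_⟩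
    rcases j with _ | q
    · exact le_rfl
    · exact (Finset.mem_filter.1 q.2).2.2
  obtain ⟨P, hPmin, hPle⟩ := Ideal.exists_minimalPrimes_le hJ
  have hPprime : P.IsPrime := hPmin.1.1
  have hJP : Ideal.span ((D.image g : Finset _) : Set (MvPolynomial L K)) ≤ P := hPmin.1.2
  refine ⟨P, hPprime, ?_, ?_⟩
  swap
  · refine (Ideal.height_le_card_of_mem_minimalPrimes_span_finset hPmin).trans ?_
    exact Nat.cast_le.2 (Finset.card_image_le.trans hDcard)
  obtain ⟨F, _, _, f, hf⟩ := mli_exists_field (K := K) P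
  have hδ : ∀ d, Matrix.det (Matrix.of fun p q : NE d => mliM f p.1.1 q.1.2) ≠ 0 := by
    intro d h0
    rw [← mliX_det f (fun p : NE d => p.1.1) (fun p : NE d => p.1.2), hf] at h0
    have h1 := hPle h0
    rw [RingHom.mem_ker] at h1
    change w (Matrix.det _) = 0 at h1
    rw [mliX_det] at h1
    have : (Matrix.of fun p q : NE d => mliM w p.1.1 q.1.2) = 1 := by
      ext p q
      rw [Matrix.of_apply, hw, Matrix.one_apply]
      have hp := (Finset.mem_filter.1 p.2).1
      have hq := (Finset.mem_filter.1 q.2).1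
      by_cases hpq : p = q
      · subst hpq
        simp [hp]
      · rw [if_neg hpq, if_neg]
        intro hh
        apply hpq
        apply Subtype.ext
        have e1 := hrow _ hh _ hp rfl
        have e2 := hcol _ hh _ hq rfl
        rw [← e1, e2]
    rw [this, Matrix.det_one] at h1
    exact one_ne_zero h1
  have hrank := mli_rank (mliM f) n Lf W
    (by
      intro x y h
      obtain ⟨i, hi, h1, h2, h3, h4⟩ := (hL _).1 h
      exact ⟨h1, h4⟩)
    (by
      intro x y h
      obtain ⟨i, hi, h1, h2, h3, h4⟩ := (hL _).1 h
      simp only at h1 h2 h3 h4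
      by_cases hx : x - 1 = 0
      · exact Or.inl hx
      · refine Or.inr ((hL _).2 ⟨i, hi, ?_, ?_, h3, h4⟩) <;> simp only <;> omega)
    (by
      intro x y h
      obtain ⟨i, hi, h1, h2, h3, h4⟩ := (hL _).1 h
      simp only at h1 h2 h3 h4
      by_cases hx : n < y + 1
      · exact Or.inl hx
      · refine Or.inr ((hL _).2 ⟨i, hi, h1, h2, ?_, ?_⟩) <;> simp only <;> omega)
    hWL
    (by
      intro x y hxy h1 h2
      have hd : (x, y) ∈ D := Finset.mem_filter.2 ⟨hxy, h1, h2⟩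
      refine ⟨mli_rel_pivot (mliM f) (NE (x, y)) x y ?_ ?_, ?_⟩
      · have : g (x, y) ∈ P := hJP (Ideal.subset_span (Finset.mem_coe.2
          (Finset.mem_image_of_mem g hd)))
        rw [← hf] at this
        change f (Matrix.det _) = 0 at this
        rw [mliX_det] at this
        convert this
      · convert hδ (x, y)
      · convert hδ (x, y))
  unfold mixedLadderIdeal
  refine iSup₂_le fun i hi => ?_
  rw [Ideal.span_le]
  rintro p ⟨r, c, hr, hc, h, rfl⟩
  rw [SetLike.mem_coe, ← hf, AlgHom.map_det]
  obtain ⟨s1, s2, s3⟩ := hsize i hi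
  obtain ⟨G, hG1, hG2⟩ := hrank _ (a i) (b i) le_rfl (Or.inr (Or.inr ((hL _).2
    ⟨i, hi, by simp only; omega, le_rfl, le_rfl, by simp only; omega⟩)))
  have hlt : G.card < t i := by
    have := hcard i hi
    omega
  have hv := mli_minor_vanish (mliM f) n (a i) (b i) (t i) G hlt hG2 r c
    (fun k => ⟨(h k ⟨0, s1⟩).1.1, (h k ⟨0, s1⟩).1.2.1⟩)
    (fun k => ⟨(h ⟨0, s1⟩ k).1.2.2.1, (h ⟨0, s1⟩ k).1.2.2.2⟩)
  rw [← hv]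
  congr 1
  ext k l
  simp [mliM_mem f _ _ (h k l).2]

/-- Height formula for mixed ladder determinantal ideals: with `L̃` the
one-sided ladder with lower outside corners `(a_i - t_i + 1, b_i + t_i - 1)`, the height of
`I_t(L)` in `K[L]` is the cardinality `|L̃|`. -/
theorem mixedLadderIdeal_height (m n s : ℕ) (hm : 1 ≤ m) (hmn : m ≤ n) (hs : 1 ≤ s)
    (L : Set (ℕ × ℕ)) (a b t : ℕ → ℕ)
    (hLsub : L ⊆ Set.Icc 1 m ×ˢ Set.Icc 1 n)
    (hcorner : ((1 : ℕ), n) ∈ L)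
    (hladder : ∀ i h j' k' : ℕ, i < h → k' < j' →
      (i, j') ∈ L → (h, k') ∈ L → (i, k') ∈ L ∧ (h, j') ∈ L)
    (hrange : ∀ i ∈ Set.Icc 1 s, 1 ≤ a i ∧ a i ≤ m ∧ 1 ≤ b i ∧ b i ≤ n)
    (hmono : ∀ i, 1 ≤ i → i < s → a i ≤ a (i + 1) ∧ b i ≤ b (i + 1))
    (hborder : ∀ i ∈ Set.Icc 1 s, (a i, b i) ∈ L ∧ (a i + 1, b i - 1) ∉ L)
    (hdecomp : L = ⋃ i ∈ Set.Icc 1 s, ladderRegion a b n i)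
    (hcorners : ∀ p ∈ L, (p.1 + 1, p.2) ∉ L → (p.1, p.2 - 1) ∉ L →
      ∃ i ∈ Set.Icc 1 s, p = (a i, b i))
    (hsize : ∀ i ∈ Set.Icc 1 s, 1 ≤ t i ∧ t i ≤ min (a i) (m - b i + 1))
    (hgap : ∀ i, 2 ≤ i → i ≤ s →
      ((b (i - 1) : ℤ) - b i < (t i : ℤ) - t (i - 1)) ∧
      ((t i : ℤ) - t (i - 1) < (a i : ℤ) - a (i - 1))) :
    idealHeight (mixedLadderIdeal K L a b t n s) =
      ((⋃ i ∈ Set.Icc 1 s,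
        ladderRegion (fun i => a i - t i + 1) (fun i => b i + t i - 1) n i).ncard : ℕ∞) := by
  have hLfin : L.Finite := ((Set.finite_Icc 1 m).prod (Set.finite_Icc 1 n)).subset hLsub
  have hsize2 : ∀ i ∈ Set.Icc 1 s, 1 ≤ t i ∧ t i ≤ a i ∧ b i + t i ≤ n + 1 := by
    intro i hi
    obtain ⟨h1, h2⟩ := hsize i hi
    obtain ⟨h3, h4, h5, h6⟩ := hrange i hi
    rw [le_min_iff] at h2
    omega
  have hgap2 : ∀ i, 1 ≤ i → i < s →
      b i + t i ≤ b (i + 1) + t (i + 1) ∧ a i + t (i + 1) ≤ a (i + 1) + t i := by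
    intro i h1 h2
    obtain ⟨g1, g2⟩ := hgap (i + 1) (by omega) (by omega)
    rw [Nat.add_sub_cancel] at g1 g2
    omega
  have hα : ∀ i, 1 ≤ i → i < s → a i - t i + 1 ≤ a (i + 1) - t (i + 1) + 1 := by
    intro i h1 h2
    have e1 := hsize2 i ⟨h1, h2.le⟩
    have e2 := hsize2 (i + 1) ⟨by omega, h2⟩
    have e3 := hgap2 i h1 h2
    omega
  have hγ : ∀ i, 1 ≤ i → i < s → b i + t i - 1 ≤ b (i + 1) + t (i + 1) - 1 := by
    intro i h1 h2
    have e3 := hgap2 i h1 h2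
    omega
  have hγ2 := mli_mono_chain (fun i => b i + t i) s (fun i h1 h2 => (hgap2 i h1 h2).1)
  have hα2 : ∀ i j, 1 ≤ i → i ≤ j → j ≤ s → a i + t j ≤ a j + t i := by
    intro i j h1 h2 h3
    have e1 := hsize2 i ⟨h1, by omega⟩
    have e2 := hsize2 j ⟨by omega, h3⟩
    have e3 := mli_mono_chain (fun i => a i - t i + 1) s hα i j h1 h2 h3
    omega
  have hset : (⋃ i ∈ Set.Icc 1 s,
        ladderRegion (fun i => a i - t i + 1) (fun i => b i + t i - 1) n i) =
      (((Finset.Icc 1 s).biUnion fun i => Finset.Icc 1 (a i - t i + 1) ×ˢ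
        Finset.Icc (b i + t i - 1) n : Finset (ℕ × ℕ)) : Set (ℕ × ℕ)) := by
    ext p
    simp only [Set.mem_iUnion, Finset.coe_biUnion, Finset.mem_coe, Finset.mem_product,
      Finset.mem_Icc, Set.mem_Icc, ladderRegion, Set.mem_ofPred_eq, exists_prop, and_assoc]
  rw [hset, Set.ncard_coe_finset]
  unfold idealHeight
  apply le_antisymm
  · obtain ⟨P, hP, hIP, hh⟩ := mli_upper (K := K) a b t n s hs hLfin hmono hα hγ hα2 hγ2 hdecomp
      hsize2
    refine (iInf₂_le (⟨P, hP⟩ : PrimeSpectrum _) hIP).trans ?_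
    rw [← PrimeSpectrum.height_eq_orderHeight]
    exact hh
  · refine le_iInf₂ fun P hIP => ?_
    rw [← PrimeSpectrum.height_eq_orderHeight]
    have := P.isPrime
    obtain ⟨F, _, _, f, hf⟩ := mli_exists_field (K := K) P.asIdeal
    exact mli_lower a b t n s hs hLfin hmono hα hγ hdecomp hsize2 f
      (fun p hp => (hf p).2 (hIP hp)) P.asIdeal (fun p hp => (hf p).1 hp)
end
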